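/- Nixon–Owen construction of simple (2,1)-tight graphs: define a class C of simple graphs inductively by: K_5 − e ∈ C and K_4 ⊔ K_4 ∈ C (where K_4 ⊔ K_4 is the graph formed by two copies of K_4 sharing exactly one edge and its two endpoints); if G ∈ C then any simple graph obtained from G by a vertex addition, an edge splitting operation, a vertex-to-K_4 operation, or a 2-dimensional vertex splitting operation is in C; and if G₁, G₂ ∈ C then any graph obtained from the disjoint union of G₁ and G₂ by adding a single edge between them is in C. Then a simple graph G is (2,1)-tight if and only if G ∈ C. -/

import Mathlib

open Finset

/-- A finite simple graph given by a finite vertex set of natural numbers and a finite set of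
edges (unordered pairs of distinct vertices). -/
structure FinGraph where
  verts : Finset ℕ
  edges : Finset (Sym2 ℕ)
  not_isDiag : ∀ e ∈ edges, ¬ e.IsDiag
  mem_verts : ∀ e ∈ edges, ∀ v ∈ e, v ∈ verts

/-- Adjacency in a `FinGraph`. -/
def FinGraph.Adj (G : FinGraph) (a b : ℕ) : Prop := s(a, b) ∈ G.edges

/-- `(V', E')` is a subgraph of `G`: the vertices and edges come from `G` and every endpoint
of an edge of `E'` lies in `V'`. -/
def SubgraphPair (G : FinGraph) (V' : Finset ℕ) (E' : Finset (Sym2 ℕ)) : Prop :=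
  V' ⊆ G.verts ∧ E' ⊆ G.edges ∧ ∀ e ∈ E', ∀ v ∈ e, v ∈ V'

/-- Vertex addition: add a new vertex `v` of degree 2 joined to two distinct existing
vertices `a` and `b`. -/
def VertexAddition (G G' : FinGraph) : Prop :=
  ∃ v a b : ℕ, v ∉ G.verts ∧ a ∈ G.verts ∧ b ∈ G.verts ∧ a ≠ b ∧
    G'.verts = insert v G.verts ∧
    G'.edges = insert s(v, a) (insert s(v, b) G.edges)

/-- Edge splitting: remove an edge `xy`, add a new vertex `v` of degree 3 joined to `x`, `y`
and a third existing vertex `z` distinct from `x` and `y`. -/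
def EdgeSplit (G G' : FinGraph) : Prop :=
  ∃ v x y z : ℕ, v ∉ G.verts ∧ x ∈ G.verts ∧ y ∈ G.verts ∧ z ∈ G.verts ∧
    z ≠ x ∧ z ≠ y ∧ s(x, y) ∈ G.edges ∧
    G'.verts = insert v G.verts ∧
    G'.edges = insert s(v, x) (insert s(v, y) (insert s(v, z) (G.edges.erase s(x, y))))

/-- Vertex-to-`K₄`: remove a vertex `v` and all its incident edges, insert four new vertices
`k 0, k 1, k 2, k 3` spanning a copy of `K₄`, and join each former neighbour `w` of `v` to
one vertex `k (f w)` of the new `K₄`. -/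
def VertexToK4 (G G' : FinGraph) : Prop :=
  ∃ (v : ℕ) (k : Fin 4 → ℕ) (f : ℕ → Fin 4),
    v ∈ G.verts ∧ Function.Injective k ∧ (∀ i, k i ∉ G.verts) ∧
    G'.verts = (G.verts.erase v) ∪ {k 0, k 1, k 2, k 3} ∧
    G'.edges = (G.edges.filter (fun e => v ∉ e)) ∪
      {s(k 0, k 1), s(k 0, k 2), s(k 0, k 3), s(k 1, k 2), s(k 1, k 3), s(k 2, k 3)} ∪
      ((G.verts.filter (fun w => s(v, w) ∈ G.edges)).image (fun w => s(w, k (f w))))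

/-- Two-dimensional vertex splitting at `v` with chosen neighbour `u₁`: remove `v` and its
incident edges, add two new vertices `v₀`, `v₁` and the edges `v₀v₁`, `u₁v₀`, `u₁v₁`, and for
each remaining neighbour `w` of `v` add exactly one of the edges `wv₀` or `wv₁` (according
to `σ w`). -/
def VertexSplit (G G' : FinGraph) : Prop :=
  ∃ (v u₁ v₀ v₁ : ℕ) (σ : ℕ → Bool),
    v ∈ G.verts ∧ s(v, u₁) ∈ G.edges ∧
    v₀ ∉ G.verts ∧ v₁ ∉ G.verts ∧ v₀ ≠ v₁ ∧
    G'.verts = insert v₀ (insert v₁ (G.verts.erase v)) ∧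
    G'.edges = (G.edges.filter (fun e => v ∉ e)) ∪
      {s(v₀, v₁), s(u₁, v₀), s(u₁, v₁)} ∪
      ((G.verts.filter (fun w => s(v, w) ∈ G.edges ∧ w ≠ u₁)).image
        (fun w => s(w, if σ w then v₁ else v₀)))

/-- `G` is a copy of `K₅ − e`: the complete graph on five distinct vertices with the edge
`ab` removed. -/
def IsK5MinusE (G : FinGraph) : Prop :=
  ∃ a b c d e : ℕ,
    a ≠ b ∧ a ≠ c ∧ a ≠ d ∧ a ≠ e ∧ b ≠ c ∧ b ≠ d ∧ b ≠ e ∧ c ≠ d ∧ c ≠ e ∧ d ≠ e ∧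
    G.verts = {a, b, c, d, e} ∧
    G.edges = {s(a, c), s(a, d), s(a, e), s(b, c), s(b, d), s(b, e),
               s(c, d), s(c, e), s(d, e)}

/-- `G` is a copy of `K₄ ⊔ K₄`: two copies of `K₄` sharing exactly the edge `ab` and its two
endpoints. -/
def IsK4JoinK4 (G : FinGraph) : Prop :=
  ∃ a b c d e f : ℕ,
    a ≠ b ∧ a ≠ c ∧ a ≠ d ∧ a ≠ e ∧ a ≠ f ∧ b ≠ c ∧ b ≠ d ∧ b ≠ e ∧ b ≠ f ∧
    c ≠ d ∧ c ≠ e ∧ c ≠ f ∧ d ≠ e ∧ d ≠ f ∧ e ≠ f ∧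
    G.verts = {a, b, c, d, e, f} ∧
    G.edges = {s(a, b), s(a, c), s(a, d), s(b, c), s(b, d), s(c, d),
               s(a, e), s(a, f), s(b, e), s(b, f), s(e, f)}

/-- Edge joining: connect the disjoint graphs `G₁` and `G₂` by a single new edge. -/
def EdgeJoin (G₁ G₂ G' : FinGraph) : Prop :=
  ∃ a b : ℕ, Disjoint G₁.verts G₂.verts ∧ a ∈ G₁.verts ∧ b ∈ G₂.verts ∧
    G'.verts = G₁.verts ∪ G₂.verts ∧
    G'.edges = insert s(a, b) (G₁.edges ∪ G₂.edges)

/-- `G` is (2,1)-tight: `|E| = 2|V| − 1` and every subgraph `(V',E')` with `V'` nonempty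
satisfies `|E'| ≤ 2|V'| − 1`. -/
def Tight21 (G : FinGraph) : Prop :=
  (G.edges.card : ℤ) = 2 * G.verts.card - 1 ∧
  ∀ V' E', SubgraphPair G V' E' → V'.Nonempty → (E'.card : ℤ) ≤ 2 * V'.card - 1

/-- The Nixon–Owen class for (2,1)-tight graphs: generated from `K₅ − e` and `K₄ ⊔ K₄` by
vertex additions, edge splits, vertex-to-`K₄` operations, vertex splitting operations, and
edge joins of two graphs in the class. -/
inductive NOClass21 : FinGraph → Prop
  | k5e (G : FinGraph) : IsK5MinusE G → NOClass21 G
  | k4k4 (G : FinGraph) : IsK4JoinK4 G → NOClass21 G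
  | va (G G' : FinGraph) : NOClass21 G → VertexAddition G G' → NOClass21 G'
  | es (G G' : FinGraph) : NOClass21 G → EdgeSplit G G' → NOClass21 G'
  | vk4 (G G' : FinGraph) : NOClass21 G → VertexToK4 G G' → NOClass21 G'
  | vs (G G' : FinGraph) : NOClass21 G → VertexSplit G G' → NOClass21 G'
  | join (G₁ G₂ G' : FinGraph) : NOClass21 G₁ → NOClass21 G₂ → EdgeJoin G₁ G₂ G' →
      NOClass21 G'


/-- Number of edges of `E` induced on `S`. -/
def ind (E : Finset (Sym2 ℕ)) (S : Finset ℕ) : ℕ := (E ∩ S.sym2).card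

/-- Number of neighbours of `v` in `B`. -/
def cut (E : Finset (Sym2 ℕ)) (v : ℕ) (B : Finset ℕ) : ℕ :=
  (B.filter (fun w => s(v, w) ∈ E)).card

/-- Set form of being tight. -/
def TT (V : Finset ℕ) (E : Finset (Sym2 ℕ)) : Prop :=
  ind E V + 1 = 2 * V.card ∧ ∀ S ⊆ V, S.Nonempty → ind E S + 1 ≤ 2 * S.card

lemma edges_ext {E F : Finset (Sym2 ℕ)} (h : ∀ a b, s(a, b) ∈ E ↔ s(a, b) ∈ F) : E = F := by
  ext e
  induction e using Sym2.ind with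
  | _ a b => exact h a b

lemma ind_congr {E F : Finset (Sym2 ℕ)} {S : Finset ℕ}
    (h : ∀ a ∈ S, ∀ b ∈ S, s(a, b) ∈ E ↔ s(a, b) ∈ F) : ind E S = ind F S := by
  unfold ind
  congr 1
  apply edges_ext
  intro a b
  simp only [mem_inter, mk_mem_sym2_iff]
  constructor
  · rintro ⟨h1, h2, h3⟩; exact ⟨(h a h2 b h3).1 h1, h2, h3⟩
  · rintro ⟨h1, h2, h3⟩; exact ⟨(h a h2 b h3).2 h1, h2, h3⟩

lemma ind_mono {E : Finset (Sym2 ℕ)} {S T : Finset ℕ} (h : S ⊆ T) : ind E S ≤ ind E T := by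
  apply card_le_card
  exact inter_subset_inter_left (sym2_mono h)

lemma cut_mono {E : Finset (Sym2 ℕ)} {v : ℕ} {S T : Finset ℕ} (h : S ⊆ T) :
    cut E v S ≤ cut E v T :=
  card_le_card (filter_subset_filter _ h)

lemma ind_insert {E : Finset (Sym2 ℕ)} (hE : ∀ e ∈ E, ¬ e.IsDiag) {v : ℕ} {S : Finset ℕ}
    (hv : v ∉ S) : ind E (insert v S) = ind E S + cut E v S := by
  unfold ind cut
  have h1 : E ∩ (insert v S).sym2 = (E ∩ S.sym2) ∪
      (S.filter (fun w => s(v, w) ∈ E)).image (fun w => s(v, w)) := by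
    apply edges_ext
    intro a b
    have hd : ∀ x, s(x, x) ∉ E := fun x hx => hE _ hx (by simp)
    have hsw : s(a, b) = s(b, a) := Sym2.eq_swap
    simp only [mem_inter, mk_mem_sym2_iff, mem_union, mem_image, mem_filter, mem_insert,
      Sym2.eq_iff]
    constructor
    · rintro ⟨h, rfl | ha, rfl | hb⟩
      · exact absurd h (hd _)
      · right; exact ⟨b, ⟨hb, h⟩, by simp⟩
      · right; exact ⟨a, ⟨ha, hsw ▸ h⟩, by simp⟩
      · left; exact ⟨h, ha, hb⟩
    · rintro (⟨h, ha, hb⟩ | ⟨w, ⟨hw, h⟩, ⟨rfl, rfl⟩ | ⟨rfl, rfl⟩⟩)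
      · exact ⟨h, Or.inr ha, Or.inr hb⟩
      · exact ⟨h, Or.inl rfl, Or.inr hw⟩
      · exact ⟨hsw ▸ h, Or.inr hw, Or.inl rfl⟩
  rw [h1, card_union_of_disjoint, card_image_of_injective]
  · intro x y h; simp only [Sym2.eq_iff] at h; omega
  · rw [disjoint_left]
    intro e he he'
    simp only [mem_image, mem_filter] at he'
    obtain ⟨w, -, rfl⟩ := he'
    simp [hv] at he

lemma cut_insert {E : Finset (Sym2 ℕ)} {a v : ℕ} {S : Finset ℕ}
    (hv : v ∉ S) : cut E a (insert v S) = cut E a S + if s(a, v) ∈ E then 1 else 0 := by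
  unfold cut
  rw [filter_insert]
  split_ifs with h
  · rw [card_insert_of_notMem]; simp [hv]
  · rfl

lemma cut_union {E : Finset (Sym2 ℕ)} {a : ℕ} {S T : Finset ℕ}
    (h : Disjoint S T) : cut E a (S ∪ T) = cut E a S + cut E a T := by
  unfold cut
  rw [filter_union, card_union_of_disjoint]
  exact disjoint_filter_filter h

lemma cut_symm_sum {E : Finset (Sym2 ℕ)} {v : ℕ} (S : Finset ℕ) :
    ∑ a ∈ S, (if s(a, v) ∈ E then 1 else 0) = cut E v S := by
  unfold cut
  rw [card_filter]
  apply sum_congr rfl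
  intro x _
  rw [Sym2.eq_swap]

@[simp] lemma cut_empty {E : Finset (Sym2 ℕ)} {v : ℕ} : cut E v ∅ = 0 := by simp [cut]
@[simp] lemma ind_empty {E : Finset (Sym2 ℕ)} : ind E ∅ = 0 := by simp [ind]

lemma cut_self {E : Finset (Sym2 ℕ)} (hE : ∀ e ∈ E, ¬ e.IsDiag) (v : ℕ) : cut E v {v} = 0 := by
  unfold cut
  rw [card_eq_zero, filter_eq_empty_iff]
  intro x hx h
  rw [mem_singleton] at hx
  subst hx
  exact hE _ h (by simp)

lemma ind_single {E : Finset (Sym2 ℕ)} (hE : ∀ e ∈ E, ¬ e.IsDiag) (v : ℕ) : ind E {v} = 0 := by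
  have := ind_insert hE (v := v) (S := ∅) (by simp)
  simpa using this

lemma ind_union {E : Finset (Sym2 ℕ)} (hE : ∀ e ∈ E, ¬ e.IsDiag) {A B : Finset ℕ}
    (h : Disjoint A B) : ind E (A ∪ B) = ind E A + ind E B + ∑ a ∈ A, cut E a B := by
  induction A using Finset.induction_on with
  | empty => simp
  | insert v A hv ih =>
    rw [disjoint_insert_left] at h
    rw [insert_union, ind_insert hE (by simp [hv, h.1]), ih h.2, ind_insert hE hv,
      sum_insert hv, cut_union h.2]
    ring

lemma handshake {E : Finset (Sym2 ℕ)} (hE : ∀ e ∈ E, ¬ e.IsDiag) (A : Finset ℕ) :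
    ∑ a ∈ A, cut E a A = 2 * ind E A := by
  induction A using Finset.induction_on with
  | empty => simp
  | insert v A hv ih =>
    rw [sum_insert hv, ind_insert hE hv, cut_insert hv]
    have h1 : s(v, v) ∉ E := fun h => hE _ h (by simp)
    have h2 : ∑ a ∈ A, cut E a (insert v A) = 2 * ind E A + cut E v A := by
      rw [← ih, ← cut_symm_sum, ← sum_add_distrib]
      exact sum_congr rfl fun x _ => cut_insert hv
    rw [h2, if_neg h1]; ring

lemma cut_lt {E : Finset (Sym2 ℕ)} (hE : ∀ e ∈ E, ¬ e.IsDiag) {A : Finset ℕ} {a : ℕ} (ha : a ∈ A) :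
    cut E a A + 1 ≤ A.card := by
  have h := cut_insert (E := E) (a := a) (notMem_erase a A)
  rw [insert_erase ha, if_neg (fun h => hE _ h (by simp))] at h
  have h2 : cut E a (A.erase a) ≤ (A.erase a).card := card_filter_le _ _
  have := card_erase_add_one ha
  omega

lemma ind_le {E : Finset (Sym2 ℕ)} (hE : ∀ e ∈ E, ¬ e.IsDiag) (A : Finset ℕ) :
    2 * ind E A + A.card ≤ A.card * A.card := by
  rw [← handshake hE, card_eq_sum_ones, ← sum_add_distrib, ← card_eq_sum_ones]
  rw [← smul_eq_mul, ← sum_const]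
  exact sum_le_sum fun a ha => cut_lt hE ha

lemma ind_small {E : Finset (Sym2 ℕ)} (hE : ∀ e ∈ E, ¬ e.IsDiag) {A : Finset ℕ}
    (hA : A.Nonempty) (h4 : A.card ≤ 4) : ind E A + 2 ≤ 2 * A.card := by
  have h := ind_le hE A
  have h0 := hA.card_pos
  generalize A.card = n at *
  interval_cases n <;> omega

lemma ind_super {E : Finset (Sym2 ℕ)} (A B : Finset ℕ) :
    ind E A + ind E B ≤ ind E (A ∪ B) + ind E (A ∩ B) := by
  unfold ind
  have h : E ∩ (A ∩ B).sym2 = (E ∩ A.sym2) ∩ (E ∩ B.sym2) := by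
    apply edges_ext
    intro a b
    simp only [mem_inter, mk_mem_sym2_iff]
    tauto
  rw [h, ← card_union_add_card_inter]
  apply Nat.add_le_add_right
  apply card_le_card
  apply union_subset <;> apply inter_subset_inter_left <;> apply sym2_mono
  · exact subset_union_left
  · exact subset_union_right

/-- A supermodularity bound with one extra edge. -/
lemma ind_super_edge {E : Finset (Sym2 ℕ)} {A B : Finset ℕ} {p q : ℕ}
    (hpq : s(p, q) ∈ E) (hp : p ∈ A) (hp2 : p ∉ B) (hq : q ∈ B) (hq2 : q ∉ A) :
    ind E A + ind E B + 1 ≤ ind E (A ∪ B) + ind E (A ∩ B) := by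
  have h := ind_super (E := E.erase s(p, q)) A B
  have e1 : ind (E.erase s(p, q)) A = ind E A := by
    apply ind_congr
    intro a ha b hb
    rw [mem_erase, Ne, Sym2.eq_iff]
    grind
  have e2 : ind (E.erase s(p, q)) B = ind E B := by
    apply ind_congr
    intro a ha b hb
    rw [mem_erase, Ne, Sym2.eq_iff]
    grind
  have e3 : ind (E.erase s(p, q)) (A ∩ B) = ind E (A ∩ B) := by
    apply ind_congr
    intro a ha b hb
    rw [mem_erase, Ne, Sym2.eq_iff]
    grind
  have e4 : ind (E.erase s(p, q)) (A ∪ B) + 1 = ind E (A ∪ B) := by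
    unfold ind
    rw [erase_inter, card_erase_add_one]
    simp [hpq, hp, hq]
  omega

lemma ind_verts (G : FinGraph) : ind G.edges G.verts = G.edges.card := by
  unfold ind
  congr 1
  rw [inter_eq_left]
  intro e he
  rw [mem_sym2_iff]
  exact G.mem_verts e he

lemma tight_iff (G : FinGraph) : Tight21 G ↔ TT G.verts G.edges := by
  unfold Tight21 TT
  rw [ind_verts]
  constructor
  · rintro ⟨h1, h2⟩
    refine ⟨by omega, fun S hS hne => ?_⟩
    have := h2 S (G.edges ∩ S.sym2) ⟨hS, inter_subset_left, fun e he v hv => by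
      rw [mem_inter, mem_sym2_iff] at he; exact he.2 v hv⟩ hne
    unfold ind; omega
  · rintro ⟨h1, h2⟩
    refine ⟨by omega, fun S F hS hne => ?_⟩
    have h3 := h2 S hS.1 hne
    have h4 : F.card ≤ ind G.edges S := by
      apply card_le_card
      intro e he
      rw [mem_inter, mem_sym2_iff]
      exact ⟨hS.2.1 he, hS.2.2 e he⟩
    omega


/-- A four-clique. -/
def Clq (E : Finset (Sym2 ℕ)) (K : Finset ℕ) : Prop :=
  K.card = 4 ∧ ∀ a ∈ K, ∀ b ∈ K, a ≠ b → s(a, b) ∈ E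

/-- Tightness of a vertex set. -/
def Tgt (E : Finset (Sym2 ℕ)) (T : Finset ℕ) : Prop := ind E T + 1 = 2 * T.card

/-- Tight graphs with no reduction. -/
structure Irr (V : Finset ℕ) (E : Finset (Sym2 ℕ)) : Prop where
  hE : ∀ e ∈ E, ¬ e.IsDiag
  hV : ∀ a b, s(a, b) ∈ E → a ∈ V
  tt : TT V E
  h1 : ∀ v ∈ V, 3 ≤ cut E v V
  h2 : ∀ v ∈ V, cut E v V = 3 → ∀ a b, s(v, a) ∈ E → s(v, b) ∈ E → a ≠ b → s(a, b) ∈ E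
  h3 : ∀ K ⊆ V, Clq E K → ∃ w ∈ V, w ∉ K ∧ 2 ≤ cut E w K
  h4 : ∀ p q r, s(p, q) ∈ E → s(p, r) ∈ E → s(q, r) ∈ E →
    (∀ x, s(p, x) ∈ E → s(q, x) ∈ E → x = r) → ∃ T ⊆ V, p ∈ T ∧ q ∈ T ∧ r ∉ T ∧ Tgt E T
  h5 : ∀ M ⊆ V, M ≠ V → M.Nonempty → Tgt E M → 2 ≤ ∑ a ∈ M, cut E a (V \ M)
  h6 : ∀ K ⊆ V, ∀ L ⊆ V, Clq E K → Clq E L → 2 ≤ (K ∩ L).card → (K ∩ L).card ≤ 3 → K ∪ L ≠ V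

lemma clq_cut {E : Finset (Sym2 ℕ)} (hE : ∀ e ∈ E, ¬ e.IsDiag) {K : Finset ℕ} (hK : Clq E K)
    {a : ℕ} (ha : a ∈ K) : K.filter (fun w => s(a, w) ∈ E) = K.erase a := by
  ext x
  simp only [mem_filter, mem_erase]
  constructor
  · rintro ⟨h1, h2⟩
    refine ⟨?_, h1⟩
    rintro rfl
    exact hE _ h2 (by simp)
  · rintro ⟨h1, h2⟩
    exact ⟨h2, hK.2 a ha x h2 (Ne.symm h1)⟩

lemma clq_ind {E : Finset (Sym2 ℕ)} (hE : ∀ e ∈ E, ¬ e.IsDiag) {K : Finset ℕ} (hK : Clq E K) :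
    ind E K = 6 := by
  have h := handshake hE K
  have h2 : ∑ a ∈ K, cut E a K = ∑ a ∈ K, 3 := by
    apply sum_congr rfl
    intro a ha
    unfold cut
    rw [clq_cut hE hK ha, card_erase_of_mem ha, hK.1]
  rw [h2, sum_const, hK.1] at h
  simp at h
  omega

lemma tgt_inter {V : Finset ℕ} {E : Finset (Sym2 ℕ)} (hT : TT V E) {A B : Finset ℕ}
    (hA : A ⊆ V) (hB : B ⊆ V) (h1 : Tgt E A) (h2 : Tgt E B) (hne : (A ∩ B).Nonempty) :
    Tgt E (A ∩ B) ∧ Tgt E (A ∪ B) := by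
  have a1 := ind_super (E := E) A B
  have a2 := hT.2 (A ∩ B) (inter_subset_left.trans hA) hne
  have a3 := hT.2 (A ∪ B) (union_subset hA hB) (hne.mono (inter_subset_left.trans subset_union_left))
  have a4 := card_union_add_card_inter A B
  unfold Tgt at *
  omega

lemma tgt_clq {V : Finset ℕ} {E : Finset (Sym2 ℕ)} (hE : ∀ e ∈ E, ¬ e.IsDiag) (hT : TT V E)
    {K T : Finset ℕ} (hKV : K ⊆ V) (hTV : T ⊆ V) (hK : Clq E K) (h1 : Tgt E T) :
    (K ∩ T).card ≤ 1 ∨ K ⊆ T := by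
  by_cases h0 : (K ∩ T).card ≤ 1
  · exact Or.inl h0
  right
  have hne : (K ∩ T).Nonempty := by rw [← card_pos]; omega
  have a1 := ind_super (E := E) K T
  have a3 := hT.2 (K ∪ T) (union_subset hKV hTV)
    (hne.mono (inter_subset_left.trans subset_union_left))
  have a4 := card_union_add_card_inter K T
  have a5 := clq_ind hE hK
  have a6 := ind_le hE (K ∩ T)
  have a7 : (K ∩ T).card ≤ K.card := card_le_card inter_subset_left
  have a8 := hK.1
  unfold Tgt at h1
  have : (K ∩ T).card = 4 := by
    have : (K ∩ T).card = 2 ∨ (K ∩ T).card = 3 ∨ (K ∩ T).card = 4 := by omega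
    rcases this with h | h | h
    · rw [h] at a6; omega
    · rw [h] at a6; omega
    · exact h
  have h9 : K ∩ T = K := eq_of_subset_of_card_le inter_subset_left (by omega)
  exact inter_eq_left.1 h9

lemma clq_union {V : Finset ℕ} {E : Finset (Sym2 ℕ)} (hE : ∀ e ∈ E, ¬ e.IsDiag) (hT : TT V E)
    {K L : Finset ℕ} (hKV : K ⊆ V) (hLV : L ⊆ V) (hK : Clq E K) (hL : Clq E L)
    (h2 : 2 ≤ (K ∩ L).card) (h3 : (K ∩ L).card ≤ 3) : Tgt E (K ∪ L) := by
  have hne : (K ∩ L).Nonempty := by rw [← card_pos]; omega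
  have a1 := ind_super (E := E) K L
  have a3 := hT.2 (K ∪ L) (union_subset hKV hLV)
    (hne.mono (inter_subset_left.trans subset_union_left))
  have a4 := card_union_add_card_inter K L
  have a5 := clq_ind hE hK
  have a5' := clq_ind hE hL
  have a6 := ind_le hE (K ∩ L)
  have a8 := hK.1
  have a9 := hL.1
  unfold Tgt
  have : (K ∩ L).card = 2 ∨ (K ∩ L).card = 3 := by omega
  rcases this with h | h
  · rw [h] at a6; omega
  · rw [h] at a6; omega

lemma clq_union_min {V : Finset ℕ} {E : Finset (Sym2 ℕ)} (hE : ∀ e ∈ E, ¬ e.IsDiag) (hT : TT V E)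
    {K L : Finset ℕ} (hKV : K ⊆ V) (hLV : L ⊆ V) (hK : Clq E K) (hL : Clq E L)
    (h2 : 2 ≤ (K ∩ L).card) {T : Finset ℕ} (hTs : T ⊆ K ∪ L)
    (hne : T.Nonempty) (hTt : Tgt E T) : T = K ∪ L := by
  have hTV : T ⊆ V := hTs.trans (union_subset hKV hLV)
  apply subset_antisymm hTs
  rcases tgt_clq hE hT hKV hTV hK hTt with h | h
  · rcases tgt_clq hE hT hLV hTV hL hTt with h' | h'
    · exfalso
      have hs : T = (K ∩ T) ∪ (L ∩ T) := by
        rw [← union_inter_distrib_right, inter_eq_right.2 hTs]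
      have h5 := card_union_le (K ∩ T) (L ∩ T)
      rw [← hs] at h5
      have := ind_small hE hne (by omega)
      unfold Tgt at hTt
      omega
    · exfalso
      have := card_le_card (inter_subset_inter_right (u := K) h')
      rw [inter_comm L K, inter_comm T K] at this
      omega
  · rcases tgt_clq hE hT hLV hTV hL hTt with h' | h'
    · exfalso
      have := card_le_card (inter_subset_inter_right (u := L) h)
      rw [inter_comm T L] at this
      omega
    · exact union_subset h h'

/-- Neighbourhood. -/
def Nb (V : Finset ℕ) (E : Finset (Sym2 ℕ)) (v : ℕ) : Finset ℕ := V.filter (fun w => s(v, w) ∈ E)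

/-- Minimal proper tight sets. -/
def Mn (V : Finset ℕ) (E : Finset (Sym2 ℕ)) (M : Finset ℕ) : Prop :=
  M ⊆ V ∧ M ≠ V ∧ M.Nonempty ∧ Tgt E M ∧ ∀ T ⊆ M, T.Nonempty → Tgt E T → T = M

/-- Degree three vertices outside the minimal tight sets. -/
def Dd (V : Finset ℕ) (E : Finset (Sym2 ℕ)) (v : ℕ) : Prop :=
  v ∈ V ∧ cut E v V = 3 ∧ ∀ M, Mn V E M → v ∉ M

namespace Irr
variable {V : Finset ℕ} {E : Finset (Sym2 ℕ)}

lemma hV' (I : Irr V E) {a b : ℕ} (h : s(a, b) ∈ E) : b ∈ V := I.hV b a (by rwa [Sym2.eq_swap])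

lemma mn_eq (I : Irr V E) {M N : Finset ℕ} (hM : Mn V E M) (hN : Mn V E N) (h : (M ∩ N).Nonempty) : M = N := by
  have h1 := (tgt_inter I.tt hM.1 hN.1 hM.2.2.2.1 hN.2.2.2.1 h).1
  rw [← hM.2.2.2.2 _ inter_subset_left h h1]
  exact hN.2.2.2.2 _ inter_subset_right h h1

lemma kv_clq (I : Irr V E) {v : ℕ} (hv : v ∈ V) (h3 : cut E v V = 3) : Clq E (insert v (Nb V E v)) := by
  have hn : v ∉ Nb V E v := by
    intro h
    exact I.hE _ (mem_filter.1 h).2 (by simp)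
  refine ⟨?_, ?_⟩
  · rw [card_insert_of_notMem hn]
    unfold cut at h3
    unfold Nb
    omega
  · intro a ha b hb hab
    rw [mem_insert, Nb, mem_filter] at ha hb
    rcases ha with rfl | ha <;> rcases hb with rfl | hb
    · exact absurd rfl hab
    · exact hb.2
    · rw [Sym2.eq_swap]; exact ha.2
    · exact I.h2 v hv h3 a b ha.2 hb.2 hab

lemma kv_sub (_I : Irr V E) {v : ℕ} (hv : v ∈ V) : insert v (Nb V E v) ⊆ V :=
  insert_subset hv (filter_subset _ _)

lemma kv_clq_inter (I : Irr V E) {v : ℕ} (hv : Dd V E v) {L : Finset ℕ} (hLV : L ⊆ V) (hL : Clq E L) :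
    (insert v (Nb V E v) ∩ L).card ≤ 1 ∨ insert v (Nb V E v) = L := by
  have hK := I.kv_clq hv.1 hv.2.1
  have hKV := I.kv_sub hv.1
  have hvK : v ∈ insert v (Nb V E v) := mem_insert_self _ _
  set K := insert v (Nb V E v)
  by_cases h0 : (K ∩ L).card ≤ 1
  · exact Or.inl h0
  right
  have a7 : (K ∩ L).card ≤ K.card := card_le_card inter_subset_left
  have a8 := hK.1
  have a9 := hL.1
  by_cases h3 : (K ∩ L).card ≤ 3
  · exfalso
    refine hv.2.2 (K ∪ L) ⟨union_subset hKV hLV, I.h6 K hKV L hLV hK hL (by omega) h3, ⟨v, by simp [hvK]⟩,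
      clq_union I.hE I.tt hKV hLV hK hL (by omega) h3, ?_⟩ (by simp [hvK])
    intro T h1 h2 h3
    exact clq_union_min I.hE I.tt hKV hLV hK hL (by omega) h1 h2 h3
  · have e1 : K ∩ L = K := eq_of_subset_of_card_le inter_subset_left (by omega)
    have e2 : K ∩ L = L := eq_of_subset_of_card_le inter_subset_right (by omega)
    rw [← e1, e2]

lemma kv_mn (I : Irr V E) {v : ℕ} (hv : Dd V E v) {M : Finset ℕ} (hM : Mn V E M) :
    (insert v (Nb V E v) ∩ M).card ≤ 1 := by
  rcases tgt_clq I.hE I.tt (I.kv_sub hv.1) hM.1 (I.kv_clq hv.1 hv.2.1) hM.2.2.2.1 with h | h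
  · exact h
  · exact absurd (h (mem_insert_self _ _)) (hv.2.2 M hM)

lemma deg5 (I : Irr V E) {K : Finset ℕ} (hKV : K ⊆ V) (hK : Clq E K) {w p q : ℕ} (hw : w ∉ K) (hp : p ∈ K)
    (hq : q ∈ K) (hpq : p ≠ q) (hwp : s(w, p) ∈ E) (hwq : s(w, q) ∈ E)
    (hall : ∀ x ∈ K, s(w, x) ∈ E → x = p ∨ x = q) : 5 ≤ cut E p V := by
  have hx : ∃ x, s(w, x) ∈ E ∧ s(p, x) ∈ E ∧ x ≠ q := by
    by_contra! hcon
    obtain ⟨T, hTV, hwT, hpT, hqT, hT⟩ := I.h4 w p q hwp hwq (hK.2 p hp q hq hpq) hcon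
    have a1 := ind_super_edge hwq hwT hw hq hqT
    have hne : (T ∩ K).Nonempty := ⟨p, by simp [hp, hpT]⟩
    have a2 := I.tt.2 (T ∪ K) (union_subset hTV hKV) ⟨w, by simp [hwT]⟩
    have a4 := card_union_add_card_inter T K
    have a5 := clq_ind I.hE hK
    have a7 : (T ∩ K).card ≤ K.card := card_le_card inter_subset_right
    have a8 := hK.1
    have a6 := ind_small I.hE hne (by omega)
    unfold Tgt at hT
    omega
  obtain ⟨x, hwx, hpx, hxq⟩ := hx
  have hxp : x ≠ p := by rintro rfl; exact I.hE _ hpx (by simp)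
  have hxK : x ∉ K := fun h => by
    rcases hall x h hwx with h | h
    · exact hxp h
    · exact hxq h
  have hwx' : w ≠ x := by rintro rfl; exact I.hE _ hwx (by simp)
  have hsub : insert w (insert x (K.erase p)) ⊆ V.filter (fun y => s(p, y) ∈ E) := by
    intro y hy
    rw [mem_filter]
    suffices h : s(p, y) ∈ E from ⟨I.hV' h, h⟩
    simp only [mem_insert, mem_erase] at hy
    rcases hy with rfl | rfl | ⟨h1, h2⟩
    · rwa [Sym2.eq_swap]
    · exact hpx
    · exact hK.2 p hp y h2 (Ne.symm h1)
  have := card_le_card hsub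
  rw [card_insert_of_notMem (by simp [hwx', hw]), card_insert_of_notMem (by simp [hxK]),
    card_erase_of_mem hp, hK.1] at this
  exact this

lemma two_big (I : Irr V E) {v : ℕ} (hv : Dd V E v) : ∃ a ∈ insert v (Nb V E v), ∃ b ∈ insert v (Nb V E v),
    a ≠ b ∧ 5 ≤ cut E a V ∧ 5 ≤ cut E b V := by
  have hK := I.kv_clq hv.1 hv.2.1
  have hKV := I.kv_sub hv.1
  have hvK : v ∈ insert v (Nb V E v) := mem_insert_self _ _
  have hin := fun L => I.kv_clq_inter hv (L := L)
  have hout : ∀ w ∉ insert v (Nb V E v), s(w, v) ∉ E := by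
    intro w hw h
    apply hw
    rw [mem_insert, Nb, mem_filter]
    right
    exact ⟨I.hV _ _ h, by rwa [Sym2.eq_swap]⟩
  set K := insert v (Nb V E v)
  obtain ⟨w, hwV, hwK, hw2⟩ := I.h3 K hKV hK
  have hle : cut E w K ≤ 3 := by
    unfold cut
    have : K.filter (fun x => s(w, x) ∈ E) ⊆ K.erase v := by
      intro x hx
      rw [mem_filter] at hx
      rw [mem_erase]
      refine ⟨?_, hx.1⟩
      rintro rfl
      exact hout w hwK hx.2
    have := card_le_card this
    rw [card_erase_of_mem hvK, hK.1] at this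
    exact this
  have h2 : cut E w K = 2 := by
    by_contra hne
    have h3 : cut E w K = 3 := by omega
    unfold cut at h3
    have hc : Clq E (insert w (K.filter (fun x => s(w, x) ∈ E))) := by
      constructor
      · rw [card_insert_of_notMem (by simp [hwK]), h3]
      · intro a ha b hb hab
        rw [mem_insert, mem_filter] at ha hb
        rcases ha with rfl | ha <;> rcases hb with rfl | hb
        · exact absurd rfl hab
        · exact hb.2
        · rw [Sym2.eq_swap]; exact ha.2
        · exact hK.2 a ha.1 b hb.1 hab
    have hs : insert w (K.filter (fun x => s(w, x) ∈ E)) ⊆ V :=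
      insert_subset hwV ((filter_subset _ _).trans hKV)
    rcases hin _ hs hc with h | h
    · have : K.filter (fun x => s(w, x) ∈ E) ⊆ K ∩ insert w (K.filter (fun x => s(w, x) ∈ E)) :=
        subset_inter (filter_subset _ _) (subset_insert _ _)
      have := card_le_card this
      omega
    · apply hwK
      rw [h]
      exact mem_insert_self _ _
  unfold cut at h2
  rw [card_eq_two] at h2
  obtain ⟨p, q, hpq, hf⟩ := h2
  have hmem : ∀ x, (x ∈ K ∧ s(w, x) ∈ E) ↔ (x = p ∨ x = q) := by
    intro x
    rw [← mem_filter (p := fun x => s(w, x) ∈ E), hf]; simp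
  have hp := (hmem p).2 (Or.inl rfl)
  have hq := (hmem q).2 (Or.inr rfl)
  refine ⟨p, hp.1, q, hq.1, hpq, ?_, ?_⟩
  · exact I.deg5 hKV hK hwK hp.1 hq.1 hpq hp.2 hq.2 fun x h1 h2 => (hmem x).1 ⟨h1, h2⟩
  · exact I.deg5 hKV hK hwK hq.1 hp.1 hpq.symm hq.2 hp.2 fun x h1 h2 => ((hmem x).1 ⟨h1, h2⟩).symm

open Classical in
lemma m_bound (I : Irr V E) (a : ℕ) (B : Finset ℕ) (KK : Finset (Finset ℕ))
    (hKK : ∀ K ∈ KK, ∃ v, Dd V E v ∧ insert v (Nb V E v) = K)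
    (ha : ∀ K ∈ KK, a ∈ K) (hB : ∀ K ∈ KK, K.erase a ⊆ B) : 3 * KK.card ≤ cut E a B := by
  have hd : (KK.biUnion (fun K => K.erase a)).card = ∑ K ∈ KK, (K.erase a).card := by
    apply card_biUnion
    intro K hK L hL hKL
    obtain ⟨v, hv, rfl⟩ := hKK K hK
    obtain ⟨u, hu, rfl⟩ := hKK L hL
    rcases I.kv_clq_inter hv (I.kv_sub hu.1) (I.kv_clq hu.1 hu.2.1) with h | h
    · rw [card_le_one] at h
      rw [Function.onFun, disjoint_left]
      intro x hx hy
      rw [mem_erase] at hx hy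
      exact hx.1 (h x (mem_inter.2 ⟨hx.2, hy.2⟩) a (mem_inter.2 ⟨ha _ hK, ha _ hL⟩))
    · exact absurd h hKL
  have h3 : ∑ K ∈ KK, (K.erase a).card = KK.card * 3 := by
    rw [sum_const_nat]
    intro K hK
    obtain ⟨v, hv, rfl⟩ := hKK K hK
    rw [card_erase_of_mem (ha _ hK), (I.kv_clq hv.1 hv.2.1).1]
  rw [mul_comm, ← h3, ← hd]
  apply card_le_card
  intro x hx
  rw [mem_biUnion] at hx
  obtain ⟨K, hK, hx⟩ := hx
  rw [mem_filter]
  refine ⟨hB K hK hx, ?_⟩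
  obtain ⟨v, hv, rfl⟩ := hKK K hK
  rw [mem_erase] at hx
  exact (I.kv_clq hv.1 hv.2.1).2 a (ha _ hK) x hx.2 (Ne.symm hx.1)

open Classical in
lemma absurd_irr (I : Irr V E) : False := by
  let D := V.filter (fun v => Dd V E v)
  let KK := D.image (fun v => insert v (Nb V E v))
  let MM := V.powerset.filter (fun M => Mn V E M)
  let U := MM.biUnion id
  let m : ℕ → ℕ := fun a => (KK.filter (fun K => a ∈ K)).card
  let g : ℕ → ℕ := fun a => if 5 ≤ cut E a V then m a else 0
  have hKK : ∀ K ∈ KK, ∃ v, Dd V E v ∧ insert v (Nb V E v) = K := by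
    intro K hK
    obtain ⟨v, hv, rfl⟩ := mem_image.1 hK
    exact ⟨v, (mem_filter.1 hv).2, rfl⟩
  have hKV : ∀ K ∈ KK, K ⊆ V := by
    intro K hK
    obtain ⟨v, hv, rfl⟩ := hKK K hK
    exact I.kv_sub hv.1
  have hMM : ∀ M ∈ MM, Mn V E M := fun M hM => (mem_filter.1 hM).2
  have hUV : U ⊆ V := by
    intro x hx
    obtain ⟨M, hM, hx⟩ := mem_biUnion.1 hx
    exact (hMM M hM).1 hx
  have hDU : ∀ a ∈ V, cut E a V = 3 → a ∉ U → a ∈ D := by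
    intro a ha h3 hU
    refine mem_filter.2 ⟨ha, ha, h3, ?_⟩
    intro M hM haM
    exact hU (mem_biUnion.2 ⟨M, mem_filter.2 ⟨mem_powerset.2 hM.1, hM⟩, haM⟩)
  have hmm : ∀ a, g a ≤ m a := by
    intro a
    simp only [g]
    split_ifs <;> omega
  -- counting D
  have hDg : D.card ≤ ∑ a ∈ V, g a := by
    have e1 : ∑ a ∈ V, g a = ∑ K ∈ KK, (K.filter (fun a => 5 ≤ cut E a V)).card := by
      have : ∀ K ∈ KK, (K.filter (fun a => 5 ≤ cut E a V)).card =
          ∑ a ∈ V, if a ∈ K ∧ 5 ≤ cut E a V then 1 else 0 := by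
        intro K hK
        rw [← card_filter]
        congr 1
        ext x
        simp only [mem_filter]
        constructor
        · rintro ⟨h1, h2⟩; exact ⟨hKV K hK h1, h1, h2⟩
        · rintro ⟨h1, h2⟩; exact h2
      rw [sum_congr rfl this, sum_comm]
      apply sum_congr rfl
      intro a _
      simp only [g, m]
      split_ifs with h5
      · simp [h5]
      · simp [h5]
    have e2 : D.card ≤ ∑ K ∈ KK, 2 := by
      rw [sum_const, smul_eq_mul, mul_comm]
      apply card_le_mul_card_image
      intro K hK
      obtain ⟨u, hu, rfl⟩ := hKK K hK
      obtain ⟨a, ha, b, hb, hab, ha5, hb5⟩ := I.two_big hu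
      have hc := (I.kv_clq hu.1 hu.2.1).1
      have hs : D.filter (fun v => insert v (Nb V E v) = insert u (Nb V E u)) ⊆
          ((insert u (Nb V E u)).erase a).erase b := by
        intro x hx
        rw [mem_filter] at hx
        have hx3 := (mem_filter.1 hx.1).2.2.1
        rw [mem_erase, mem_erase]
        refine ⟨?_, ?_, ?_⟩
        · rintro rfl; omega
        · rintro rfl; omega
        · rw [← hx.2]; exact mem_insert_self _ _
      have := card_le_card hs
      rw [card_erase_of_mem (mem_erase.2 ⟨hab.symm, hb⟩), card_erase_of_mem ha, hc] at this
      exact this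
    rw [e1]
    refine e2.trans (sum_le_sum ?_)
    intro K hK
    obtain ⟨u, hu, rfl⟩ := hKK K hK
    obtain ⟨a, ha, b, hb, hab, ha5, hb5⟩ := I.two_big hu
    have : 1 < ((insert u (Nb V E u)).filter (fun a => 5 ≤ cut E a V)).card := by
      rw [one_lt_card]
      exact ⟨a, mem_filter.2 ⟨ha, ha5⟩, b, mem_filter.2 ⟨hb, hb5⟩, hab⟩
    omega
  -- vertices outside U
  have hout : ∀ a ∈ V \ U, 4 + g a ≤ cut E a V + if a ∈ D then 1 else 0 := by
    intro a ha
    rw [mem_sdiff] at ha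
    have h3 := I.h1 a ha.1
    by_cases h5 : 5 ≤ cut E a V
    · have := I.m_bound a V (KK.filter (fun K => a ∈ K)) (fun K hK => hKK K (mem_filter.1 hK).1)
        (fun K hK => (mem_filter.1 hK).2)
        (fun K hK => (erase_subset _ _).trans (hKV K (mem_filter.1 hK).1))
      have h6 : g a = (KK.filter (fun K => a ∈ K)).card := by simp only [g, m, if_pos h5]
      omega
    · have h6 : g a = 0 := by simp only [g, if_neg h5]
      by_cases h4 : cut E a V = 3
      · rw [if_pos (hDU a ha.1 h4 ha.2)]; omega
      · omega
  -- minimal tight sets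
  have hin : ∀ M ∈ MM, 4 * M.card + ∑ a ∈ M, g a ≤ ∑ a ∈ M, cut E a V := by
    intro M hM
    have hMn := hMM M hM
    have h5 := I.h5 M hMn.1 hMn.2.1 hMn.2.2.1 hMn.2.2.2.1
    have h6 : ∑ a ∈ M, cut E a V = ∑ a ∈ M, cut E a M + ∑ a ∈ M, cut E a (V \ M) := by
      rw [← sum_add_distrib]
      apply sum_congr rfl
      intro a _
      rw [← cut_union disjoint_sdiff, union_sdiff_of_subset hMn.1]
    have h7 : 3 * ∑ a ∈ M, g a ≤ ∑ a ∈ M, cut E a (V \ M) := by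
      rw [mul_sum]
      apply sum_le_sum
      intro a ha
      have := I.m_bound a (V \ M) (KK.filter (fun K => a ∈ K))
        (fun K hK => hKK K (mem_filter.1 hK).1)
        (fun K hK => (mem_filter.1 hK).2) (by
          intro K hK x hx
          rw [mem_filter] at hK
          rw [mem_erase] at hx
          rw [mem_sdiff]
          refine ⟨hKV K hK.1 hx.2, fun hxM => ?_⟩
          obtain ⟨u, hu, rfl⟩ := hKK K hK.1
          have := I.kv_mn hu hMn
          rw [card_le_one] at this
          exact hx.1 (this x (mem_inter.2 ⟨hx.2, hxM⟩) a (mem_inter.2 ⟨hK.2, ha⟩)))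
      have h8 := hmm a
      simp only [m] at h8
      omega
    rw [h6, handshake I.hE]
    have := hMn.2.2.2.1
    unfold Tgt at this
    omega
  have hdis : (MM : Set (Finset ℕ)).PairwiseDisjoint id := by
    intro M hM N hN hMN
    rw [Function.onFun, id, id, disjoint_iff_inter_eq_empty]
    by_contra hne
    exact hMN (I.mn_eq (hMM M hM) (hMM N hN) (nonempty_iff_ne_empty.2 hne))
  have hU : 4 * U.card + ∑ a ∈ U, g a ≤ ∑ a ∈ U, cut E a V := by
    rw [card_biUnion (fun x hx y hy h => hdis hx hy h), sum_biUnion hdis, sum_biUnion hdis, mul_sum,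
      ← sum_add_distrib]
    exact sum_le_sum hin
  have hW : 4 * (V \ U).card + ∑ a ∈ V \ U, g a ≤ ∑ a ∈ V \ U, cut E a V + D.card := by
    have := sum_le_sum hout
    rw [sum_add_distrib, sum_add_distrib, sum_const, smul_eq_mul, mul_comm, ← card_filter] at this
    have h2 : ((V \ U).filter (fun a => a ∈ D)).card ≤ D.card := by
      apply card_le_card
      intro x hx
      exact (mem_filter.1 hx).2
    omega
  have hs1 := sum_sdiff (f := g) hUV
  have hs2 := sum_sdiff (f := fun a => cut E a V) hUV
  have hs3 := card_sdiff_add_card_eq_card hUV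
  have hs4 := handshake I.hE V
  have := I.tt.1
  omega

end Irr


lemma ind_insert_edge {E : Finset (Sym2 ℕ)} {x y : ℕ} (h : s(x, y) ∉ E) (S : Finset ℕ) :
    ind (insert s(x, y) E) S = ind E S + if x ∈ S ∧ y ∈ S then 1 else 0 := by
  unfold ind
  split_ifs with hs
  · rw [insert_inter_of_mem (by simpa using hs), card_insert_of_notMem (by simp [h])]
  · rw [insert_inter_of_notMem (by simpa using hs)]; rfl

lemma TT_va {V : Finset ℕ} {E E' : Finset (Sym2 ℕ)} (hE' : ∀ e ∈ E', ¬ e.IsDiag) {v : ℕ}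
    (hv : v ∉ V) (hag : ∀ a ∈ V, ∀ b ∈ V, s(a, b) ∈ E ↔ s(a, b) ∈ E')
    (hc : cut E' v V = 2) (h : TT V E) : TT (insert v V) E' := by
  have hi : ∀ S ⊆ V, ind E S = ind E' S := fun S hS =>
    ind_congr fun a ha b hb => hag a (hS ha) b (hS hb)
  constructor
  · rw [ind_insert hE' hv, hc, card_insert_of_notMem hv, ← hi V subset_rfl]
    have := h.1
    omega
  · intro S hS hne
    by_cases hvS : v ∈ S
    · have hS' : S.erase v ⊆ V := by rwa [← subset_insert_iff]
      rw [← insert_erase hvS, ind_insert hE' (notMem_erase v S),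
        card_insert_of_notMem (notMem_erase v S), ← hi _ hS']
      rcases (S.erase v).eq_empty_or_nonempty with h0 | h0
      · simp [h0]
      · have := h.2 _ hS' h0
        have := cut_mono (E := E') (v := v) hS'
        omega
    · have hS' : S ⊆ V := (subset_insert_iff_of_notMem hvS).1 hS
      rw [← hi S hS']
      exact h.2 S hS' hne

lemma TT_va_rev {V : Finset ℕ} {E : Finset (Sym2 ℕ)} (hE : ∀ e ∈ E, ¬ e.IsDiag) {v : ℕ}
    (hv : v ∉ V) (hc : cut E v V = 2) (h : TT (insert v V) E) : TT V E := by
  have h1 := h.1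
  rw [ind_insert hE hv, hc, card_insert_of_notMem hv] at h1
  exact ⟨by omega, fun S hS hne => h.2 S (hS.trans (subset_insert _ _)) hne⟩

lemma TT_es {V : Finset ℕ} {E E' : Finset (Sym2 ℕ)} (hE' : ∀ e ∈ E', ¬ e.IsDiag) {v x y : ℕ}
    (hv : v ∉ V) (hx : x ∈ V) (hy : y ∈ V) (hxy : s(x, y) ∈ E)
    (hag : ∀ a ∈ V, ∀ b ∈ V, s(a, b) ∈ E.erase s(x, y) ↔ s(a, b) ∈ E')
    (hvx : s(v, x) ∈ E') (hvy : s(v, y) ∈ E')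
    (hc : cut E' v V = 3) (h : TT V E) : TT (insert v V) E' := by
  have hi : ∀ S ⊆ V, ind E S = ind E' S + if x ∈ S ∧ y ∈ S then 1 else 0 := fun S hS => by
    have h1 := ind_congr (E := E.erase s(x, y)) (F := E') (S := S)
      fun a ha b hb => hag a (hS ha) b (hS hb)
    rw [← h1, ← ind_insert_edge (notMem_erase _ _), insert_erase hxy]
  constructor
  · rw [ind_insert hE' hv, hc, card_insert_of_notMem hv]
    have := h.1
    rw [hi V subset_rfl, if_pos ⟨hx, hy⟩] at this
    omega
  · intro S hS hne
    by_cases hvS : v ∈ S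
    · have hS' : S.erase v ⊆ V := by rwa [← subset_insert_iff]
      rw [← insert_erase hvS, ind_insert hE' (notMem_erase v S),
        card_insert_of_notMem (notMem_erase v S)]
      have hi' := hi _ hS'
      rcases (S.erase v).eq_empty_or_nonempty with h0 | h0
      · simp [h0]
      · have h4 := h.2 _ hS' h0
        have h5 := cut_mono (E := E') (v := v) hS'
        by_cases h6 : x ∈ S.erase v ∧ y ∈ S.erase v
        · rw [if_pos h6] at hi'
          omega
        · rw [if_neg h6] at hi'
          have h7 : cut E' v (S.erase v) < cut E' v V := by
            apply card_lt_card
            rw [ssubset_iff_of_subset (filter_subset_filter _ hS')]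
            by_cases hx' : x ∈ S.erase v
            · exact ⟨y, mem_filter.2 ⟨hy, hvy⟩, fun hh => h6 ⟨hx', (mem_filter.1 hh).1⟩⟩
            · exact ⟨x, mem_filter.2 ⟨hx, hvx⟩, fun hh => hx' (mem_filter.1 hh).1⟩
          omega
    · have hS' : S ⊆ V := (subset_insert_iff_of_notMem hvS).1 hS
      have := h.2 S hS' hne
      rw [hi S hS'] at this
      omega

lemma TT_es_rev {V : Finset ℕ} {E E' : Finset (Sym2 ℕ)} (hE' : ∀ e ∈ E', ¬ e.IsDiag) {v x y : ℕ}
    (hv : v ∉ V) (hx : x ∈ V) (hy : y ∈ V) (hxy : s(x, y) ∉ E)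
    (hag : ∀ a ∈ V, ∀ b ∈ V, s(a, b) ∈ E ↔ s(a, b) ∈ E')
    (hno : ∀ T ⊆ V, x ∈ T → y ∈ T → ¬ Tgt E' T)
    (hc : cut E' v V = 3) (h : TT (insert v V) E') : TT V (insert s(x, y) E) := by
  have h1 := h.1
  rw [ind_insert hE' hv, hc, card_insert_of_notMem hv] at h1
  have hi : ∀ S ⊆ V, ind (insert s(x, y) E) S = ind E' S + if x ∈ S ∧ y ∈ S then 1 else 0 := by
    intro S hS
    rw [ind_insert_edge hxy, ind_congr (E := E) (F := E') (S := S)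
      fun a ha b hb => hag a (hS ha) b (hS hb)]
  refine ⟨by rw [hi V subset_rfl, if_pos ⟨hx, hy⟩]; omega, fun S hS hne => ?_⟩
  have h2 := h.2 S (hS.trans (subset_insert _ _)) hne
  rw [hi S hS]
  split_ifs with h3
  · have := hno S hS h3.1 h3.2
    unfold Tgt at this
    omega
  · omega

/-- Data common to the two contraction type moves: `insert v R` is the small graph, `R ∪ F`
the big one. -/
structure Ctr (R F : Finset ℕ) (v : ℕ) (E E' : Finset (Sym2 ℕ)) : Prop where
  hE : ∀ e ∈ E, ¬ e.IsDiag
  hE' : ∀ e ∈ E', ¬ e.IsDiag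
  hv : v ∉ R
  hd : Disjoint R F
  hag : ∀ a ∈ R, ∀ b ∈ R, s(a, b) ∈ E ↔ s(a, b) ∈ E'

lemma Ctr.ind_eq {R F : Finset ℕ} {v : ℕ} {E E' : Finset (Sym2 ℕ)} (C : Ctr R F v E E')
    {S T : Finset ℕ} (hS : S ⊆ R) (hT : T ⊆ F) :
    ind E' (S ∪ T) + cut E v S = ind E (insert v S) + ind E' T + ∑ a ∈ S, cut E' a T := by
  rw [ind_union C.hE' (disjoint_of_subset_left hS (disjoint_of_subset_right hT C.hd)),
    ind_insert C.hE (fun h => C.hv (hS h)),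
    ind_congr (E := E) (F := E') (S := S) fun a ha b hb => C.hag a (hS ha) b (hS hb)]
  ring

lemma Ctr.split {R F S : Finset ℕ} (hS : S ⊆ R ∪ F) : S = (S ∩ R) ∪ (S ∩ F) := by
  rw [← inter_union_distrib_left, inter_eq_left.2 hS]

lemma Ctr.card_un {R F : Finset ℕ} {v : ℕ} {E E' : Finset (Sym2 ℕ)} (C : Ctr R F v E E')
    {S T : Finset ℕ} (hS : S ⊆ R) (hT : T ⊆ F) : (S ∪ T).card = S.card + T.card :=
  card_union_of_disjoint (disjoint_of_subset_left hS (disjoint_of_subset_right hT C.hd))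

lemma Ctr.card_in {R F : Finset ℕ} {v : ℕ} {E E' : Finset (Sym2 ℕ)} (C : Ctr R F v E E')
    {S : Finset ℕ} (hS : S ⊆ R) : (insert v S).card = S.card + 1 :=
  card_insert_of_notMem (fun h => C.hv (hS h))

lemma Ctr.ind_R {R F : Finset ℕ} {v : ℕ} {E E' : Finset (Sym2 ℕ)} (C : Ctr R F v E E')
    {S : Finset ℕ} (hS : S ⊆ R) : ind E S = ind E' S :=
  ind_congr fun a ha b hb => C.hag a (hS ha) b (hS hb)

lemma Ctr.k4_sum {R F : Finset ℕ} {v : ℕ} {E E' : Finset (Sym2 ℕ)}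
    (hcut : ∀ w ∈ R, cut E' w F = if s(w, v) ∈ E then 1 else 0)
    {S T : Finset ℕ} (hS : S ⊆ R) (hT : T ⊆ F) : ∑ a ∈ S, cut E' a T ≤ cut E v S := by
  rw [← cut_symm_sum]
  apply sum_le_sum
  intro a ha
  rw [← hcut a (hS ha)]
  exact cut_mono hT

lemma Ctr.k4_sum_eq {R F : Finset ℕ} {v : ℕ} {E E' : Finset (Sym2 ℕ)}
    (hcut : ∀ w ∈ R, cut E' w F = if s(w, v) ∈ E then 1 else 0)
    {S : Finset ℕ} (hS : S ⊆ R) : ∑ a ∈ S, cut E' a F = cut E v S := by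
  rw [← cut_symm_sum]
  apply sum_congr rfl
  intro a ha
  rw [← hcut a (hS ha)]

lemma Ctr.k4 {R F : Finset ℕ} {v : ℕ} {E E' : Finset (Sym2 ℕ)} (C : Ctr R F v E E')
    (hF : Clq E' F) (hcut : ∀ w ∈ R, cut E' w F = if s(w, v) ∈ E then 1 else 0)
    (h : TT (insert v R) E) : TT (R ∪ F) E' := by
  have h6 := clq_ind C.hE' hF
  have h4 := hF.1
  constructor
  · have e1 := C.ind_eq (subset_refl R) (subset_refl F)
    have e2 := Ctr.k4_sum_eq hcut (subset_refl R)
    have e3 := C.card_un (subset_refl R) (subset_refl F)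
    have e4 := C.card_in (subset_refl R)
    have := h.1
    omega
  · intro S hS hne
    rw [Ctr.split hS]
    rcases (S ∩ F).eq_empty_or_nonempty with h0 | h0
    · have hSR : S ⊆ R := by
        rw [Ctr.split hS, h0, union_empty]; exact inter_subset_right
      rw [h0, union_empty, inter_eq_left.2 hSR, ← C.ind_R hSR]
      exact h.2 S (hSR.trans (subset_insert _ _)) hne
    · have i1 : S ∩ R ⊆ R := inter_subset_right
      have i2 : S ∩ F ⊆ F := inter_subset_right
      have e1 := C.ind_eq i1 i2
      have e2 := Ctr.k4_sum hcut i1 i2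
      have e3 := C.card_un i1 i2
      have e4 := C.card_in i1
      have e5 := h.2 (insert v (S ∩ R)) (insert_subset_insert _ i1) (by simp)
      have e6 := ind_small C.hE' h0 (by have := card_le_card i2; omega)
      omega

lemma Ctr.k4_rev {R F : Finset ℕ} {v : ℕ} {E E' : Finset (Sym2 ℕ)} (C : Ctr R F v E E')
    (hF : Clq E' F) (hcut : ∀ w ∈ R, cut E' w F = if s(w, v) ∈ E then 1 else 0)
    (h : TT (R ∪ F) E') : TT (insert v R) E := by
  have h6 := clq_ind C.hE' hF
  have h4 := hF.1
  have hFne : F.Nonempty := by rw [← card_pos]; omega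
  constructor
  · have e1 := C.ind_eq (subset_refl R) (subset_refl F)
    have e2 := Ctr.k4_sum_eq hcut (subset_refl R)
    have e3 := C.card_un (subset_refl R) (subset_refl F)
    have e4 := C.card_in (subset_refl R)
    have := h.1
    omega
  · intro S hS hne
    by_cases hvS : v ∈ S
    · have hS' : S.erase v ⊆ R := by rwa [← subset_insert_iff]
      have e1 := C.ind_eq hS' (subset_refl F)
      have e2 := Ctr.k4_sum_eq hcut hS'
      have e3 := C.card_un hS' (subset_refl F)
      have e4 := C.card_in hS'
      rw [insert_erase hvS] at e1 e4
      have := h.2 (S.erase v ∪ F) (union_subset_union_left hS') (hFne.mono subset_union_right)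
      omega
    · have hS' : S ⊆ R := (subset_insert_iff_of_notMem hvS).1 hS
      rw [C.ind_R hS']
      exact h.2 S (hS'.trans subset_union_left) hne

lemma Ctr.vs_sum {R F : Finset ℕ} {v u : ℕ} {E E' : Finset (Sym2 ℕ)}
    (hcut : ∀ w ∈ R, cut E' w F = (if s(w, v) ∈ E then 1 else 0) + if u = w then 1 else 0)
    {S : Finset ℕ} (hS : S ⊆ R) : ∑ a ∈ S, cut E' a F = cut E v S + if u ∈ S then 1 else 0 := by
  rw [← cut_symm_sum, sum_congr rfl (fun w hw => hcut w (hS hw)), sum_add_distrib, sum_ite_eq]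

lemma ind_pair {E : Finset (Sym2 ℕ)} (hE : ∀ e ∈ E, ¬ e.IsDiag) {p q : ℕ} (hpq : s(p, q) ∈ E) :
    ind E {p, q} = 1 := by
  have hne : p ≠ q := by rintro rfl; exact hE _ hpq (by simp)
  rw [ind_insert hE (by simpa using hne), ind_single hE]
  have := cut_insert (E := E) (a := p) (v := q) (S := ∅) (by simp)
  rw [if_pos hpq, insert_empty_eq] at this
  simp [this]

lemma Ctr.vs {R : Finset ℕ} {v u p q : ℕ} {E E' : Finset (Sym2 ℕ)} (C : Ctr R {p, q} v E E')
    (hpq : s(p, q) ∈ E') (hu : u ∈ R)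
    (hcut : ∀ w ∈ R, cut E' w {p, q} = (if s(w, v) ∈ E then 1 else 0) + if u = w then 1 else 0)
    (hp1 : ∀ w ∈ R, cut E' w {p} ≤ (if s(w, v) ∈ E then 1 else 0))
    (hq1 : ∀ w ∈ R, cut E' w {q} ≤ (if s(w, v) ∈ E then 1 else 0))
    (h : TT (insert v R) E) : TT (R ∪ {p, q}) E' := by
  have h1 := ind_pair C.hE' hpq
  have hne : p ≠ q := by rintro rfl; exact C.hE' _ hpq (by simp)
  have h2 : ({p, q} : Finset ℕ).card = 2 := card_pair hne
  constructor
  · have e1 := C.ind_eq (subset_refl R) (subset_refl {p, q})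
    have e2 := Ctr.vs_sum hcut (subset_refl R)
    have e3 := C.card_un (subset_refl R) (subset_refl {p, q})
    have e4 := C.card_in (subset_refl R)
    have := h.1
    rw [if_pos hu] at e2
    omega
  · intro S hS hne
    rw [Ctr.split hS]
    have i1 : S ∩ R ⊆ R := inter_subset_right
    have i2 : S ∩ {p, q} ⊆ {p, q} := inter_subset_right
    have e5 := h.2 (insert v (S ∩ R)) (insert_subset_insert _ i1) (by simp)
    have e1 := C.ind_eq i1 i2
    have e3 := C.card_un i1 i2
    have e4 := C.card_in i1
    have hone : ∀ r, (∀ w ∈ R, cut E' w {r} ≤ (if s(w, v) ∈ E then 1 else 0)) →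
        S ∩ {p, q} = {r} → ind E' (S ∩ R ∪ S ∩ {p, q}) + 1 ≤ 2 * (S ∩ R ∪ S ∩ {p, q}).card := by
      intro r hr hs
      rw [hs] at e1 e3 ⊢
      have e2 : ∑ a ∈ S ∩ R, cut E' a {r} ≤ cut E v (S ∩ R) := by
        rw [← cut_symm_sum]
        exact sum_le_sum fun a ha => hr a (i1 ha)
      rw [ind_single C.hE'] at e1
      rw [card_singleton] at e3
      omega
    by_cases hpS : p ∈ S <;> by_cases hqS : q ∈ S
    · have hs : S ∩ {p, q} = {p, q} := by
        ext x; simp only [mem_inter, mem_insert, mem_singleton]; grind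
      rw [hs] at e1 e3 ⊢
      have e2 := Ctr.vs_sum hcut i1
      split_ifs at e2 <;> omega
    · exact hone p hp1 (by ext x; simp only [mem_inter, mem_insert, mem_singleton]; grind)
    · exact hone q hq1 (by ext x; simp only [mem_inter, mem_insert, mem_singleton]; grind)
    · have h0 : S ∩ {p, q} = ∅ := by
        ext x; simp only [mem_inter, mem_insert, mem_singleton, notMem_empty]; grind
      have hSR : S ⊆ R := by
        rw [Ctr.split hS, h0, union_empty]; exact inter_subset_right
      rw [h0, union_empty, inter_eq_left.2 hSR, ← C.ind_R hSR]
      exact h.2 S (hSR.trans (subset_insert _ _)) hne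

lemma Ctr.vs_rev {R : Finset ℕ} {v u p q : ℕ} {E E' : Finset (Sym2 ℕ)} (C : Ctr R {p, q} v E E')
    (hpq : s(p, q) ∈ E') (hu : u ∈ R)
    (hcut : ∀ w ∈ R, cut E' w {p, q} = (if s(w, v) ∈ E then 1 else 0) + if u = w then 1 else 0)
    (hno : ∀ T ⊆ R ∪ {p, q}, p ∈ T → q ∈ T → u ∉ T → ¬ Tgt E' T)
    (h : TT (R ∪ {p, q}) E') : TT (insert v R) E := by
  have h1 := ind_pair C.hE' hpq
  have hne : p ≠ q := by rintro rfl; exact C.hE' _ hpq (by simp)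
  have h2 : ({p, q} : Finset ℕ).card = 2 := card_pair hne
  constructor
  · have e1 := C.ind_eq (subset_refl R) (subset_refl {p, q})
    have e2 := Ctr.vs_sum hcut (subset_refl R)
    have e3 := C.card_un (subset_refl R) (subset_refl {p, q})
    have e4 := C.card_in (subset_refl R)
    have := h.1
    rw [if_pos hu] at e2
    omega
  · intro S hS hne
    by_cases hvS : v ∈ S
    · have hS' : S.erase v ⊆ R := by rwa [← subset_insert_iff]
      have e1 := C.ind_eq hS' (subset_refl {p, q})
      have e2 := Ctr.vs_sum hcut hS'
      have e3 := C.card_un hS' (subset_refl {p, q})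
      have e4 := C.card_in hS'
      rw [insert_erase hvS] at e1 e4
      have hsub : S.erase v ∪ {p, q} ⊆ R ∪ {p, q} := union_subset_union_left hS'
      have := h.2 (S.erase v ∪ {p, q}) hsub ⟨p, by simp⟩
      by_cases hus : u ∈ S.erase v
      · rw [if_pos hus] at e2
        omega
      · have hu' : u ∉ S.erase v ∪ {p, q} := by
          rw [mem_union, not_or]
          exact ⟨hus, fun hh => disjoint_left.1 C.hd hu hh⟩
        have h7 := hno _ hsub (by simp) (by simp) hu'
        unfold Tgt at h7
        rw [if_neg hus] at e2
        omega
    · have hS' : S ⊆ R := (subset_insert_iff_of_notMem hvS).1 hS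
      rw [C.ind_R hS']
      exact h.2 S (hS'.trans subset_union_left) hne

lemma TT_join {V₁ V₂ : Finset ℕ} {E' : Finset (Sym2 ℕ)} (hE' : ∀ e ∈ E', ¬ e.IsDiag)
    (hd : Disjoint V₁ V₂) (h1 : TT V₁ E') (h2 : TT V₂ E') (hc : ∑ a ∈ V₁, cut E' a V₂ = 1) :
    TT (V₁ ∪ V₂) E' := by
  constructor
  · rw [ind_union hE' hd, hc, card_union_of_disjoint hd]
    have := h1.1
    have := h2.1
    omega
  · intro S hS hne
    rw [Ctr.split hS]
    have i1 : S ∩ V₁ ⊆ V₁ := inter_subset_right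
    have i2 : S ∩ V₂ ⊆ V₂ := inter_subset_right
    have hd' := disjoint_of_subset_left i1 (disjoint_of_subset_right i2 hd)
    rcases (S ∩ V₁).eq_empty_or_nonempty with e1 | e1
    · rw [e1, empty_union]
      refine h2.2 _ i2 ?_
      rw [Ctr.split hS, e1, empty_union] at hne
      exact hne
    · rcases (S ∩ V₂).eq_empty_or_nonempty with e2 | e2
      · rw [e2, union_empty]
        exact h1.2 _ i1 e1
      · rw [ind_union hE' hd', card_union_of_disjoint hd']
        have a1 := h1.2 _ i1 e1
        have a2 := h2.2 _ i2 e2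
        have : ∑ a ∈ S ∩ V₁, cut E' a (S ∩ V₂) ≤ ∑ a ∈ V₁, cut E' a V₂ :=
          (sum_le_sum fun a _ => cut_mono i2).trans (sum_le_sum_of_subset i1)
        omega

lemma TT_congr {V : Finset ℕ} {E E' : Finset (Sym2 ℕ)}
    (hag : ∀ a ∈ V, ∀ b ∈ V, s(a, b) ∈ E ↔ s(a, b) ∈ E') (h : TT V E) : TT V E' := by
  have hi : ∀ S ⊆ V, ind E S = ind E' S := fun S hS =>
    ind_congr fun a ha b hb => hag a (hS ha) b (hS hb)
  exact ⟨hi V subset_rfl ▸ h.1, fun S hS hne => hi S hS ▸ h.2 S hS hne⟩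


lemma FinGraph.l (G : FinGraph) {a b : ℕ} (h : s(a, b) ∈ G.edges) : a ∈ G.verts :=
  G.mem_verts _ h a (by simp)
lemma FinGraph.r (G : FinGraph) {a b : ℕ} (h : s(a, b) ∈ G.edges) : b ∈ G.verts :=
  G.mem_verts _ h b (by simp)
lemma FinGraph.ne (G : FinGraph) {a b : ℕ} (h : s(a, b) ∈ G.edges) : a ≠ b := by
  rintro rfl
  exact G.not_isDiag _ h (by simp)
lemma sw {E : Finset (Sym2 ℕ)} {a b : ℕ} (h : s(a, b) ∈ E) : s(b, a) ∈ E := by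
  rwa [Sym2.eq_swap]

lemma fwd_va {G G' : FinGraph} (h : TT G.verts G.edges) (hop : VertexAddition G G') :
    TT G'.verts G'.edges := by
  obtain ⟨v, a, b, hv, ha, hb, hab, hV, hE⟩ := hop
  rw [hV]
  have hva : v ≠ a := by rintro rfl; exact hv ha
  have hvb : v ≠ b := by rintro rfl; exact hv hb
  refine TT_va G'.not_isDiag hv ?_ ?_ h
  · intro p hp q hq
    have : p ≠ v := by rintro rfl; exact hv hp
    have : q ≠ v := by rintro rfl; exact hv hq
    rw [hE]
    simp only [mem_insert, Sym2.eq_iff]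
    tauto
  · unfold cut
    have : G.verts.filter (fun w => s(v, w) ∈ G'.edges) = {a, b} := by
      ext w
      rw [hE]
      simp only [mem_filter, mem_insert, Sym2.eq_iff, mem_singleton]
      have := fun h => hv (G.l (a := v) (b := w) h)
      grind
    rw [this, card_pair hab]

lemma fwd_es {G G' : FinGraph} (h : TT G.verts G.edges) (hop : EdgeSplit G G') :
    TT G'.verts G'.edges := by
  obtain ⟨v, x, y, z, hv, hx, hy, hz, hzx, hzy, hxy, hV, hE⟩ := hop
  rw [hV]
  have hxy' := G.ne hxy
  refine TT_es G'.not_isDiag hv hx hy hxy ?_ (by simp [hE]) (by simp [hE]) ?_ h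
  · intro p hp q hq
    have : p ≠ v := by rintro rfl; exact hv hp
    have : q ≠ v := by rintro rfl; exact hv hq
    rw [hE]
    simp only [mem_insert, Sym2.eq_iff]
    tauto
  · unfold cut
    have : G.verts.filter (fun w => s(v, w) ∈ G'.edges) = {x, y, z} := by
      ext w
      rw [hE]
      simp only [mem_filter, mem_insert, Sym2.eq_iff, mem_singleton, mem_erase]
      have := fun h => hv (G.l (a := v) (b := w) h)
      grind
    rw [this, card_eq_three]
    exact ⟨x, y, z, hxy', hzx.symm, hzy.symm, rfl⟩

lemma fwd_join {G₁ G₂ G' : FinGraph} (h₁ : TT G₁.verts G₁.edges) (h₂ : TT G₂.verts G₂.edges)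
    (hop : EdgeJoin G₁ G₂ G') : TT G'.verts G'.edges := by
  obtain ⟨a, b, hd, ha, hb, hV, hE⟩ := hop
  rw [hV]
  have hd' := disjoint_left.1 hd
  refine TT_join G'.not_isDiag hd (TT_congr ?_ h₁) (TT_congr ?_ h₂) ?_
  · intro p hp q hq
    rw [hE]
    simp only [mem_insert, Sym2.eq_iff, mem_union]
    have := G₂.l (a := p) (b := q)
    grind
  · intro p hp q hq
    rw [hE]
    simp only [mem_insert, Sym2.eq_iff, mem_union]
    have := G₁.l (a := p) (b := q)
    grind
  · rw [sum_eq_single_of_mem a ha]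
    · have : G₂.verts.filter (fun w => s(a, w) ∈ G'.edges) = {b} := by
        ext w
        rw [hE]
        simp only [mem_filter, mem_insert, Sym2.eq_iff, mem_union, mem_singleton]
        have := G₂.l (a := a) (b := w)
        have := G₁.r (a := a) (b := w)
        grind
      unfold cut
      rw [this, card_singleton]
    · intro p hp hpa
      unfold cut
      rw [card_eq_zero, filter_eq_empty_iff]
      intro w hw
      rw [hE]
      simp only [mem_insert, Sym2.eq_iff, mem_union]
      have := G₂.l (a := p) (b := w)
      have := G₁.r (a := p) (b := w)
      grind

lemma vk4_mem {G : FinGraph} {E' : Finset (Sym2 ℕ)} {v : ℕ} {k : Fin 4 → ℕ} {f : ℕ → Fin 4}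
    (hE : E' = (G.edges.filter (fun e => v ∉ e)) ∪
      {s(k 0, k 1), s(k 0, k 2), s(k 0, k 3), s(k 1, k 2), s(k 1, k 3), s(k 2, k 3)} ∪
      ((G.verts.filter (fun w => s(v, w) ∈ G.edges)).image (fun w => s(w, k (f w))))) (p q : ℕ) :
    s(p, q) ∈ E' ↔ (s(p, q) ∈ G.edges ∧ p ≠ v ∧ q ≠ v) ∨
      (∃ i j, i ≠ j ∧ p = k i ∧ q = k j) ∨ (s(v, p) ∈ G.edges ∧ q = k (f p)) ∨
      (s(v, q) ∈ G.edges ∧ p = k (f q)) := by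
  rw [hE]
  simp only [mem_union, mem_filter, mem_image, or_assoc]
  refine or_congr ?_ (or_congr ?_ ?_)
  · simp only [Sym2.mem_iff, not_or, ne_comm, ne_eq]
  · simp only [mem_insert, mem_singleton, Sym2.eq_iff]
    constructor
    · rintro ((⟨rfl, rfl⟩ | ⟨rfl, rfl⟩) | (⟨rfl, rfl⟩ | ⟨rfl, rfl⟩) | (⟨rfl, rfl⟩ | ⟨rfl, rfl⟩) |
        (⟨rfl, rfl⟩ | ⟨rfl, rfl⟩) | (⟨rfl, rfl⟩ | ⟨rfl, rfl⟩) | (⟨rfl, rfl⟩ | ⟨rfl, rfl⟩)) <;>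
      exact ⟨_, _, by decide, rfl, rfl⟩
    · rintro ⟨i, j, hij, rfl, rfl⟩
      fin_cases i <;> fin_cases j <;> simp at hij ⊢
  · constructor
    · rintro ⟨w, ⟨-, hw⟩, he⟩
      rw [Sym2.eq_iff] at he
      rcases he with ⟨rfl, rfl⟩ | ⟨rfl, rfl⟩
      · exact Or.inl ⟨hw, rfl⟩
      · exact Or.inr ⟨hw, rfl⟩
    · rintro (⟨hw, rfl⟩ | ⟨hw, rfl⟩)
      · exact ⟨p, ⟨G.r hw, hw⟩, rfl⟩
      · exact ⟨q, ⟨G.r hw, hw⟩, Sym2.eq_swap⟩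

lemma fwd_vk4 {G G' : FinGraph} (h : TT G.verts G.edges) (hop : VertexToK4 G G') :
    TT G'.verts G'.edges := by
  obtain ⟨v, k, f, hv, hk, hkG, hV, hE⟩ := hop
  rw [hV]
  have hF : ∀ x, x ∈ ({k 0, k 1, k 2, k 3} : Finset ℕ) ↔ ∃ i, x = k i := by
    intro x
    rw [Fin.exists_fin_succ, Fin.exists_fin_succ, Fin.exists_fin_succ, Fin.exists_fin_succ]
    simp
  have hE' := vk4_mem hE
  have C : Ctr (G.verts.erase v) {k 0, k 1, k 2, k 3} v G.edges G'.edges := by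
    refine ⟨G.not_isDiag, G'.not_isDiag, notMem_erase _ _, ?_, ?_⟩
    · rw [disjoint_left]
      intro x hx hx'
      obtain ⟨i, rfl⟩ := (hF x).1 hx'
      exact hkG i (mem_erase.1 hx).2
    · intro p hp q hq
      rw [mem_erase] at hp hq
      rw [hE']
      constructor
      · intro h; exact Or.inl ⟨h, hp.1, hq.1⟩
      · rintro (h | ⟨i, j, _, rfl, _⟩ | ⟨_, rfl⟩ | ⟨_, rfl⟩)
        · exact h.1
        · exact absurd hp.2 (hkG _)
        · exact absurd hq.2 (hkG _)
        · exact absurd hp.2 (hkG _)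
  rw [← insert_erase hv] at h
  refine C.k4 ⟨?_, ?_⟩ ?_ h
  · have : ({k 0, k 1, k 2, k 3} : Finset ℕ) = univ.image k := by
      ext x; rw [hF]; simp [eq_comm]
    rw [this, card_image_of_injective _ hk]; simp
  · intro p hp q hq hpq
    obtain ⟨i, rfl⟩ := (hF p).1 hp
    obtain ⟨j, rfl⟩ := (hF q).1 hq
    rw [hE']
    right; left
    exact ⟨i, j, fun hij => hpq (by rw [hij]), rfl, rfl⟩
  · intro w hw
    rw [mem_erase] at hw
    unfold cut
    split_ifs with hwv
    · rw [card_eq_one]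
      refine ⟨k (f w), ?_⟩
      ext x
      rw [mem_filter, hF, hE', mem_singleton]
      constructor
      · rintro ⟨⟨i, rfl⟩, h | ⟨i, j, _, rfl, _⟩ | ⟨_, h⟩ | ⟨h, _⟩⟩
        · exact absurd (G.r h.1) (hkG _)
        · exact absurd hw.2 (hkG _)
        · exact h
        · exact absurd (G.r h) (hkG _)
      · rintro rfl
        exact ⟨⟨_, rfl⟩, Or.inr (Or.inr (Or.inl ⟨sw hwv, rfl⟩))⟩
    · rw [card_eq_zero, filter_eq_empty_iff]
      intro x hx
      rw [hF] at hx
      rw [hE']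
      obtain ⟨i, rfl⟩ := hx
      rintro (h | ⟨i, j, _, rfl, _⟩ | ⟨h, _⟩ | ⟨h, _⟩)
      · exact absurd (G.r h.1) (hkG _)
      · exact absurd hw.2 (hkG _)
      · exact hwv (sw h)
      · exact absurd (G.r h) (hkG _)

lemma vs_mem {G : FinGraph} {E' : Finset (Sym2 ℕ)} {v u v₀ v₁ : ℕ} {σ : ℕ → Bool}
    (hE : E' = (G.edges.filter (fun e => v ∉ e)) ∪
      {s(v₀, v₁), s(u, v₀), s(u, v₁)} ∪
      ((G.verts.filter (fun w => s(v, w) ∈ G.edges ∧ w ≠ u)).image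
        (fun w => s(w, if σ w then v₁ else v₀)))) (p q : ℕ) :
    s(p, q) ∈ E' ↔ (s(p, q) ∈ G.edges ∧ p ≠ v ∧ q ≠ v) ∨
      (s(p, q) = s(v₀, v₁) ∨ s(p, q) = s(u, v₀) ∨ s(p, q) = s(u, v₁)) ∨
      (s(v, p) ∈ G.edges ∧ p ≠ u ∧ q = if σ p then v₁ else v₀) ∨
      (s(v, q) ∈ G.edges ∧ q ≠ u ∧ p = if σ q then v₁ else v₀) := by
  rw [hE]
  simp only [mem_union, mem_filter, mem_image]
  rw [or_assoc]
  refine or_congr ?_ (or_congr ?_ ?_)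
  · simp only [Sym2.mem_iff, not_or, ne_comm, ne_eq]
  · simp only [mem_insert, mem_singleton]
  · constructor
    · rintro ⟨w, ⟨-, hw, hwu⟩, he⟩
      rw [Sym2.eq_iff] at he
      rcases he with ⟨rfl, rfl⟩ | ⟨rfl, rfl⟩
      · exact Or.inl ⟨hw, hwu, rfl⟩
      · exact Or.inr ⟨hw, hwu, rfl⟩
    · rintro (⟨hw, hwu, rfl⟩ | ⟨hw, hwu, rfl⟩)
      · exact ⟨p, ⟨G.r hw, hw, hwu⟩, rfl⟩
      · exact ⟨q, ⟨G.r hw, hw, hwu⟩, Sym2.eq_swap⟩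

lemma cut_pair {E : Finset (Sym2 ℕ)} {w p q : ℕ} (h : p ≠ q) :
    cut E w {p, q} = (if s(w, p) ∈ E then 1 else 0) + if s(w, q) ∈ E then 1 else 0 := by
  rw [show ({p, q} : Finset ℕ) = insert p (insert q ∅) by simp, cut_insert (by simpa using h),
    cut_insert (by simp)]
  simp; ring

lemma cut_one {E : Finset (Sym2 ℕ)} {w p : ℕ} :
    cut E w {p} = (if s(w, p) ∈ E then 1 else 0) := by
  rw [← insert_empty_eq, cut_insert (by simp)]
  simp

lemma fwd_vs {G G' : FinGraph} (h : TT G.verts G.edges) (hop : VertexSplit G G') :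
    TT G'.verts G'.edges := by
  obtain ⟨v, u, v₀, v₁, σ, hv, hvu, h0, h1, h01, hV, hE⟩ := hop
  have hE' := vs_mem hE
  have hV' : G'.verts = G.verts.erase v ∪ {v₀, v₁} := by
    rw [hV]; ext x; simp only [mem_insert, mem_union, mem_singleton]; tauto
  rw [hV']
  have huV := G.r hvu
  have hne := G.ne hvu
  have hn0 : ∀ x ∈ G.verts, x ≠ v₀ := by rintro x hx rfl; exact h0 hx
  have hn1 : ∀ x ∈ G.verts, x ≠ v₁ := by rintro x hx rfl; exact h1 hx
  have C : Ctr (G.verts.erase v) {v₀, v₁} v G.edges G'.edges := by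
    refine ⟨G.not_isDiag, G'.not_isDiag, notMem_erase _ _, ?_, ?_⟩
    · rw [disjoint_left]
      intro x hx hx'
      rw [mem_erase] at hx
      rw [mem_insert, mem_singleton] at hx'
      rcases hx' with rfl | rfl
      · exact h0 hx.2
      · exact h1 hx.2
    · intro p hp q hq
      rw [mem_erase] at hp hq
      rw [hE']
      simp only [Sym2.eq_iff]
      have p0 := hn0 p hp.2
      have p1 := hn1 p hp.2
      have q0 := hn0 q hq.2
      have q1 := hn1 q hq.2
      have i1 : ¬ (q = if σ p then v₁ else v₀) := by split_ifs <;> assumption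
      have i2 : ¬ (p = if σ q then v₁ else v₀) := by split_ifs <;> assumption
      simp only [p0, p1, q0, q1, i1, i2, hp.1, hq.1, ne_eq, not_false_eq_true, and_true,
        and_false, false_and, or_false]
  have k0 : ∀ w, w ∈ G.verts.erase v → (s(w, v₀) ∈ G'.edges ↔ s(w, v) ∈ G.edges ∧ (w = u ∨ σ w = false)) := by
    intro w hw
    rw [mem_erase] at hw
    rw [hE']
    simp only [Sym2.eq_iff]
    rw [Sym2.eq_swap (a := w) (b := v)]
    have n1 : s(w, v₀) ∉ G.edges := fun h => hn0 _ (G.r h) rfl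
    have n2 : s(v, v₀) ∉ G.edges := fun h => hn0 _ (G.r h) rfl
    have p0 := hn0 w hw.2
    have p1 := hn1 w hw.2
    have u0 := hn0 u huV
    have u1 := hn1 u huV
    simp only [n1, n2, p0, p1, u0.symm, u1.symm, h01, h01.symm, false_and, and_false, and_true,
      or_false, false_or, true_and]
    by_cases hwu : w = u
    · subst hwu; simp [hvu]
    · cases hs : σ w <;> simp [hwu, h01, h01.symm]
  have k1 : ∀ w, w ∈ G.verts.erase v → (s(w, v₁) ∈ G'.edges ↔ s(w, v) ∈ G.edges ∧ (w = u ∨ σ w = true)) := by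
    intro w hw
    rw [mem_erase] at hw
    rw [hE']
    simp only [Sym2.eq_iff]
    rw [Sym2.eq_swap (a := w) (b := v)]
    have n1 : s(w, v₁) ∉ G.edges := fun h => hn1 _ (G.r h) rfl
    have n2 : s(v, v₁) ∉ G.edges := fun h => hn1 _ (G.r h) rfl
    have p0 := hn0 w hw.2
    have p1 := hn1 w hw.2
    have u0 := hn0 u huV
    have u1 := hn1 u huV
    simp only [n1, n2, p0, p1, u0.symm, u1.symm, h01, h01.symm, false_and, and_false, and_true,
      or_false, false_or, true_and]
    by_cases hwu : w = u
    · subst hwu; simp [hvu]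
    · cases hs : σ w <;> simp [hwu, h01, h01.symm]
  rw [← insert_erase hv] at h
  have hvu' := sw hvu
  refine C.vs (u := u) (by rw [hE']; simp) (mem_erase.2 ⟨hne.symm, huV⟩) ?_ ?_ ?_ h
  · intro w hw
    rw [cut_pair h01]
    rw [if_congr (k0 w hw) rfl rfl, if_congr (k1 w hw) rfl rfl]
    by_cases hwu : w = u
    · subst hwu; simp [hvu']
    · cases hs : σ w <;> simp [hwu, Ne.symm hwu]
  · intro w hw
    rw [cut_one]
    rw [if_congr (k0 w hw) rfl rfl]
    split_ifs <;> simp_all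
  · intro w hw
    rw [cut_one]
    rw [if_congr (k1 w hw) rfl rfl]
    split_ifs <;> simp_all

lemma two_le_cut {E : Finset (Sym2 ℕ)} {S : Finset ℕ} {x p q : ℕ} (hpq : p ≠ q) (hp : p ∈ S)
    (hq : q ∈ S) (h1 : s(x, p) ∈ E) (h2 : s(x, q) ∈ E) : 2 ≤ cut E x S := by
  have : 1 < cut E x S := by
    unfold cut
    rw [one_lt_card]
    exact ⟨p, mem_filter.2 ⟨hp, h1⟩, q, mem_filter.2 ⟨hq, h2⟩, hpq⟩
  omega

lemma fwd_k5e {G : FinGraph} (h : IsK5MinusE G) : TT G.verts G.edges := by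
  obtain ⟨a, b, c, d, e, h1, h2, h3, h4, h5, h6, h7, h8, h9, h10, hV, hE⟩ := h
  have hc : G.verts.card = 5 := by
    rw [hV]; simp [h1, h2, h3, h4, h5, h6, h7, h8, h9, h10]
  have he : G.edges.card = 9 := by
    rw [hE]
    repeat rw [card_insert_of_notMem (by
      simp only [mem_insert, mem_singleton, Sym2.eq_iff]; grind)]
    simp
  have ht : ind G.edges G.verts + 1 = 2 * G.verts.card := by rw [ind_verts, hc, he]
  refine ⟨ht, fun S hS hne => ?_⟩
  have h5 := card_le_card hS
  by_cases h4 : S.card ≤ 4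
  · have := ind_small G.not_isDiag hne h4; omega
  · have : S = G.verts := eq_of_subset_of_card_le hS (by omega)
    rw [this, ht]

lemma fwd_k4k4 {G : FinGraph} (h : IsK4JoinK4 G) : TT G.verts G.edges := by
  obtain ⟨a, b, c, d, e, f, h1, h2, h3, h4, h5, h6, h7, h8, h9, h10, h11, h12, h13, h14, h15,
    hV, hE⟩ := h
  have hc : G.verts.card = 6 := by
    rw [hV]; simp [h1, h2, h3, h4, h5, h6, h7, h8, h9, h10, h11, h12, h13, h14, h15]
  have he : G.edges.card = 11 := by
    rw [hE]
    repeat rw [card_insert_of_notMem (by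
      simp only [mem_insert, mem_singleton, Sym2.eq_iff]; grind)]
    simp
  have ht : ind G.edges G.verts + 1 = 2 * G.verts.card := by rw [ind_verts, hc, he]
  refine ⟨ht, fun S hS hne => ?_⟩
  have h5' := card_le_card hS
  by_cases h4 : S.card ≤ 4
  · have := ind_small G.not_isDiag hne h4; omega
  by_cases h6 : S.card = 6
  · have : S = G.verts := eq_of_subset_of_card_le hS (by omega)
    rw [this, ht]
  · have h5 : S.card = 5 := by omega
    have hx : ∃ x ∈ G.verts, x ∉ S := by
      by_contra! hcon
      have := card_le_card hcon
      omega
    obtain ⟨x, hxV, hxS⟩ := hx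
    have hins : insert x S = G.verts := by
      apply eq_of_subset_of_card_le (insert_subset hxV hS)
      rw [card_insert_of_notMem hxS]; omega
    have hi := ind_insert G.not_isDiag hxS
    rw [hins] at hi
    suffices 2 ≤ cut G.edges x S by omega
    have hm : ∀ y, y ∈ G.verts → y ≠ x → y ∈ S := by
      intro y hy hyx
      rw [← hins, mem_insert] at hy
      tauto
    rw [hV] at hxV hm
    simp only [mem_insert, mem_singleton] at hxV
    rcases hxV with rfl | rfl | rfl | rfl | rfl | rfl
    · refine two_le_cut (p := c) (q := d) ‹_› (hm _ (by simp) (by grind)) (hm _ (by simp) (by grind)) ?_ ?_ <;> rw [hE] <;> simp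
    · refine two_le_cut (p := c) (q := d) ‹_› (hm _ (by simp) (by grind)) (hm _ (by simp) (by grind)) ?_ ?_ <;> rw [hE] <;> simp
    · refine two_le_cut (p := a) (q := b) ‹_› (hm _ (by simp) (by grind)) (hm _ (by simp) (by grind)) ?_ ?_ <;> rw [hE] <;> simp
    · refine two_le_cut (p := a) (q := b) ‹_› (hm _ (by simp) (by grind)) (hm _ (by simp) (by grind)) ?_ ?_ <;> rw [hE] <;> simp
    · refine two_le_cut (p := a) (q := b) ‹_› (hm _ (by simp) (by grind)) (hm _ (by simp) (by grind)) ?_ ?_ <;> rw [hE] <;> simp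
    · refine two_le_cut (p := a) (q := b) ‹_› (hm _ (by simp) (by grind)) (hm _ (by simp) (by grind)) ?_ ?_ <;> rw [hE] <;> simp

lemma fwd {G : FinGraph} (h : NOClass21 G) : TT G.verts G.edges := by
  induction h with
  | k5e G h => exact fwd_k5e h
  | k4k4 G h => exact fwd_k4k4 h
  | va G G' _ h ih => exact fwd_va ih h
  | es G G' _ h ih => exact fwd_es ih h
  | vk4 G G' _ h ih => exact fwd_vk4 ih h
  | vs G G' _ h ih => exact fwd_vs ih h
  | join G₁ G₂ G' _ _ h ih1 ih2 => exact fwd_join ih1 ih2 h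


/-- Induced subgraph. -/
def restr (G : FinGraph) (S : Finset ℕ) : FinGraph where
  verts := S
  edges := G.edges ∩ S.sym2
  not_isDiag := fun e he => G.not_isDiag e (mem_inter.1 he).1
  mem_verts := fun e he v hv => mem_sym2_iff.1 (mem_inter.1 he).2 v hv

lemma mem_restr {G : FinGraph} {S : Finset ℕ} {a b : ℕ} :
    s(a, b) ∈ (restr G S).edges ↔ s(a, b) ∈ G.edges ∧ a ∈ S ∧ b ∈ S := by
  simp [restr, mk_mem_sym2_iff]

lemma TT_restr {G : FinGraph} {S : Finset ℕ} (h : TT S G.edges) :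
    TT (restr G S).verts (restr G S).edges := by
  refine TT_congr (E := G.edges) ?_ h
  intro a ha b hb
  rw [mem_restr]
  exact ⟨fun h => ⟨h, ha, hb⟩, fun h => h.1⟩

lemma cut_erase {G : FinGraph} (v : ℕ) (S : Finset ℕ) :
    cut G.edges v (S.erase v) = cut G.edges v S := by
  unfold cut
  congr 1
  ext x
  simp only [mem_filter, mem_erase]
  constructor
  · rintro ⟨⟨_, h⟩, h2⟩; exact ⟨h, h2⟩
  · rintro ⟨h, h2⟩; exact ⟨⟨(G.ne h2).symm, h⟩, h2⟩

lemma rev_deg {G : FinGraph} (h : TT G.verts G.edges) {v : ℕ} (hv : v ∈ G.verts) :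
    2 ≤ cut G.edges v G.verts := by
  have h1 := ind_insert G.not_isDiag (notMem_erase v G.verts)
  rw [insert_erase hv, cut_erase] at h1
  have h2 := h.1
  have h3 := card_erase_add_one hv
  by_cases hne : (G.verts.erase v).Nonempty
  · have := h.2 _ (erase_subset v _) hne
    omega
  · rw [not_nonempty_iff_eq_empty] at hne
    rw [hne] at h1 h3
    have : ind G.edges ∅ = 0 := by simp [ind]
    have : cut G.edges v G.verts ≤ 0 := by
      rw [← cut_erase, hne]; simp [cut]
    simp at h3
    omega

lemma rev_va {G : FinGraph} (h : TT G.verts G.edges) {v : ℕ} (hv : v ∈ G.verts)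
    (hc : cut G.edges v G.verts = 2) :
    ∃ H, VertexAddition H G ∧ TT H.verts H.edges ∧ H.verts.card < G.verts.card := by
  refine ⟨restr G (G.verts.erase v), ?_, ?_, card_erase_lt_of_mem hv⟩
  · unfold cut at hc
    rw [card_eq_two] at hc
    obtain ⟨a, b, hab, hs⟩ := hc
    have hm : ∀ x, s(v, x) ∈ G.edges ↔ x = a ∨ x = b := by
      intro x
      have : x ∈ G.verts.filter (fun w => s(v, w) ∈ G.edges) ↔ x ∈ ({a, b} : Finset ℕ) := by rw [hs]
      simp only [mem_filter, mem_insert, mem_singleton] at this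
      rw [← this]
      exact ⟨fun h => ⟨G.r h, h⟩, fun h => h.2⟩
    have ha := (hm a).2 (Or.inl rfl)
    have hb := (hm b).2 (Or.inr rfl)
    refine ⟨v, a, b, notMem_erase _ _, mem_erase.2 ⟨(G.ne ha).symm, G.r ha⟩,
      mem_erase.2 ⟨(G.ne hb).symm, G.r hb⟩, hab, (insert_erase hv).symm, ?_⟩
    apply edges_ext
    intro p q
    rw [mem_insert, mem_insert, mem_restr, mem_erase, mem_erase]
    constructor
    · intro h
      by_cases hp : p = v
      · subst hp
        rcases (hm q).1 h with rfl | rfl <;> simp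
      by_cases hq : q = v
      · subst hq
        rcases (hm p).1 (sw h) with rfl | rfl <;> simp [Sym2.eq_swap]
      exact Or.inr (Or.inr ⟨h, ⟨hp, G.l h⟩, hq, G.r h⟩)
    · rintro (h | h | h)
      · rw [h]; exact ha
      · rw [h]; exact hb
      · exact h.1
  · apply TT_restr
    refine TT_va_rev G.not_isDiag (notMem_erase v _) (by rw [cut_erase, hc]) ?_
    rwa [insert_erase hv]

/-- Adding an edge. -/
def addE (G : FinGraph) (x y : ℕ) (hx : x ∈ G.verts) (hy : y ∈ G.verts) (hxy : x ≠ y) : FinGraph where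
  verts := G.verts
  edges := insert s(x, y) G.edges
  not_isDiag := by
    intro e he
    rcases mem_insert.1 he with rfl | he
    · simpa using hxy
    · exact G.not_isDiag e he
  mem_verts := by
    intro e he v hv
    rcases mem_insert.1 he with rfl | he
    · rcases Sym2.mem_iff.1 hv with rfl | rfl <;> assumption
    · exact G.mem_verts e he v hv

lemma rev_es' {G : FinGraph} (h : TT G.verts G.edges) {v x y z : ℕ} (hv : v ∈ G.verts)
    (hm : ∀ w, s(v, w) ∈ G.edges ↔ w = x ∨ w = y ∨ w = z) (hxy : x ≠ y) (hxz : x ≠ z) (hyz : y ≠ z)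
    (hc : cut G.edges v G.verts = 3) (hn : s(x, y) ∉ G.edges)
    (hno : ∀ T ⊆ G.verts.erase v, x ∈ T → y ∈ T → ¬ Tgt G.edges T) :
    ∃ H, EdgeSplit H G ∧ TT H.verts H.edges ∧ H.verts.card < G.verts.card := by
  have hx := (hm x).2 (by simp)
  have hy := (hm y).2 (by simp)
  have hz := (hm z).2 (by simp)
  have hx' := mem_erase.2 ⟨(G.ne hx).symm, G.r hx⟩
  have hy' := mem_erase.2 ⟨(G.ne hy).symm, G.r hy⟩
  have hz' := mem_erase.2 ⟨(G.ne hz).symm, G.r hz⟩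
  refine ⟨addE (restr G (G.verts.erase v)) x y hx' hy' hxy, ?_, ?_, card_erase_lt_of_mem hv⟩
  · have hn' : s(x, y) ∉ (restr G (G.verts.erase v)).edges := by
      rw [mem_restr]; tauto
    refine ⟨v, x, y, z, notMem_erase _ _, hx', hy', hz', hxz.symm, hyz.symm, mem_insert_self _ _,
      (insert_erase hv).symm, ?_⟩
    change _ = insert _ (insert _ (insert _ ((insert s(x, y) (restr G (G.verts.erase v)).edges).erase _)))
    rw [erase_insert hn']
    apply edges_ext
    intro p q
    rw [mem_insert, mem_insert, mem_insert, mem_restr, mem_erase, mem_erase]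
    constructor
    · intro h
      by_cases hp : p = v
      · subst hp
        rcases (hm q).1 h with rfl | rfl | rfl <;> simp
      by_cases hq : q = v
      · subst hq
        rcases (hm p).1 (sw h) with rfl | rfl | rfl <;> simp [Sym2.eq_swap]
      exact Or.inr (Or.inr (Or.inr ⟨h, ⟨hp, G.l h⟩, hq, G.r h⟩))
    · rintro (h | h | h | h)
      · rw [h]; exact hx
      · rw [h]; exact hy
      · rw [h]; exact hz
      · exact h.1
  · refine TT_es_rev (v := v) (E' := G.edges) (V := G.verts.erase v) G.not_isDiag (notMem_erase _ _) hx' hy' ?_ ?_ hno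
      (by rw [cut_erase, hc]) (by rwa [insert_erase hv])
    · rw [mem_restr]; tauto
    · intro a ha b hb
      rw [mem_restr]; tauto

lemma rev_es {G : FinGraph} (h : TT G.verts G.edges) {v : ℕ} (hv : v ∈ G.verts)
    (hc : cut G.edges v G.verts = 3)
    (hnon : ¬ ∃ H, EdgeSplit H G ∧ TT H.verts H.edges ∧ H.verts.card < G.verts.card) :
    ∀ a b, s(v, a) ∈ G.edges → s(v, b) ∈ G.edges → a ≠ b → s(a, b) ∈ G.edges := by
  have hE := G.not_isDiag
  have key : ∀ T ⊆ G.verts.erase v, Tgt G.edges T → cut G.edges v T ≤ 2 := by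
    intro T hT ht
    by_contra hcon
    have h1 : v ∉ T := fun h => by simpa using hT h
    have h2 := ind_insert hE h1
    have h3 := h.2 (insert v T) (insert_subset hv (hT.trans (erase_subset _ _))) (insert_nonempty _ _)
    rw [card_insert_of_notMem h1] at h3
    unfold Tgt at ht
    omega
  have h3 : ∀ T, ∀ x y z, x ∈ T → y ∈ T → z ∈ T → x ≠ y → x ≠ z → y ≠ z → s(v, x) ∈ G.edges →
      s(v, y) ∈ G.edges → s(v, z) ∈ G.edges → T ⊆ G.verts.erase v → ¬ Tgt G.edges T := by
    intro T x y z hx hy hz hxy hxz hyz ex ey ez hT ht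
    have := key T hT ht
    have : 2 < cut G.edges v T := by
      unfold cut
      rw [two_lt_card]
      exact ⟨x, mem_filter.2 ⟨hx, ex⟩, y, mem_filter.2 ⟨hy, ey⟩, z, mem_filter.2 ⟨hz, ez⟩, hxy, hxz, hyz⟩
    omega
  have hc' := hc
  unfold cut at hc'
  rw [card_eq_three] at hc'
  obtain ⟨x, y, z, hxy, hxz, hyz, hs⟩ := hc'
  have hm : ∀ w, s(v, w) ∈ G.edges ↔ w = x ∨ w = y ∨ w = z := by
    intro w
    have : w ∈ G.verts.filter (fun w => s(v, w) ∈ G.edges) ↔ w ∈ ({x, y, z} : Finset ℕ) := by rw [hs]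
    simp only [mem_filter, mem_insert, mem_singleton] at this
    rw [← this]
    exact ⟨fun h => ⟨G.r h, h⟩, fun h => h.2⟩
  -- every nonadjacent pair is blocked
  have hb : ∀ x y z, (∀ w, s(v, w) ∈ G.edges ↔ w = x ∨ w = y ∨ w = z) → x ≠ y → x ≠ z → y ≠ z →
      s(x, y) ∉ G.edges → ∃ T ⊆ G.verts.erase v, x ∈ T ∧ y ∈ T ∧ z ∉ T ∧ Tgt G.edges T := by
    intro x y z hm hxy hxz hyz hn
    by_contra! hcon
    refine hnon (rev_es' h hv hm hxy hxz hyz hc hn ?_)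
    intro T hT hx hy ht
    by_cases hz : z ∈ T
    · exact h3 T x y z hx hy hz hxy hxz hyz ((hm x).2 (by simp)) ((hm y).2 (by simp))
        ((hm z).2 (by simp)) hT ht
    · exact hcon T hT hx hy hz ht
  have main : ∀ x y z, (∀ w, s(v, w) ∈ G.edges ↔ w = x ∨ w = y ∨ w = z) → x ≠ y → x ≠ z → y ≠ z →
      s(x, y) ∈ G.edges := by
    intro x y z hm hxy hxz hyz
    by_contra hn
    obtain ⟨T, hT, hx, hy, hz, ht⟩ := hb x y z hm hxy hxz hyz hn
    have ex := (hm x).2 (by simp)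
    have ey := (hm y).2 (by simp)
    have ez := (hm z).2 (by simp)
    have two : ∀ U ⊆ G.verts.erase v, (∃ w ∈ U, w ∈ T) → z ∈ U → Tgt G.edges U → False := by
      rintro U hU ⟨w, hw, hw'⟩ hzU hUt
      have := (tgt_inter h (hT.trans (erase_subset _ _)) (hU.trans (erase_subset _ _)) ht hUt
        ⟨w, mem_inter.2 ⟨hw', hw⟩⟩).2
      exact h3 (T ∪ U) x y z (mem_union_left _ hx) (mem_union_left _ hy) (mem_union_right _ hzU)
        hxy hxz hyz ex ey ez (union_subset hT hU) this
    by_cases h1 : s(x, z) ∈ G.edges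
    · by_cases h2 : s(y, z) ∈ G.edges
      · have h4 : 2 ≤ cut G.edges z T := two_le_cut hxy hx hy (sw h1) (sw h2)
        have h5 := ind_insert hE hz
        have hsub : insert z T ⊆ G.verts.erase v := insert_subset (mem_erase.2 ⟨(G.ne ez).symm, G.r ez⟩) hT
        have h6 := h.2 (insert z T) (hsub.trans (erase_subset _ _)) (insert_nonempty _ _)
        rw [card_insert_of_notMem hz] at h6
        unfold Tgt at ht
        refine h3 (insert z T) x y z (mem_insert_of_mem hx) (mem_insert_of_mem hy)
          (mem_insert_self _ _) hxy hxz hyz ex ey ez hsub ?_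
        unfold Tgt
        rw [card_insert_of_notMem hz]
        omega
      · obtain ⟨U, hU, hy2, hz2, -, hUt⟩ := hb y z x (fun w => by rw [hm]; tauto) hyz hxy.symm hxz.symm h2
        exact two U hU ⟨y, hy2, hy⟩ hz2 hUt
    · obtain ⟨U, hU, hx2, hz2, -, hUt⟩ := hb x z y (fun w => by rw [hm]; tauto) hxz hxy hyz.symm h1
      exact two U hU ⟨x, hx2, hx⟩ hz2 hUt
  have e1 := main x y z hm hxy hxz hyz
  have e2 := main x z y (fun w => by rw [hm]; tauto) hxz hxy hyz.symm
  have e3 := main y z x (fun w => by rw [hm]; tauto) hyz hxy.symm hxz.symm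
  intro a b ha hb hab
  rcases (hm a).1 ha with rfl | rfl | rfl <;> rcases (hm b).1 hb with rfl | rfl | rfl <;>
    first
    | exact absurd rfl hab
    | assumption
    | exact sw (by assumption)

lemma rev_join {G : FinGraph} (h : TT G.verts G.edges) {M : Finset ℕ} (hM : M ⊆ G.verts)
    (hMV : M ≠ G.verts) (hne : M.Nonempty) (ht : Tgt G.edges M)
    (hlt : ∑ a ∈ M, cut G.edges a (G.verts \ M) < 2) :
    ∃ H₁ H₂, EdgeJoin H₁ H₂ G ∧ TT H₁.verts H₁.edges ∧ H₁.verts.card < G.verts.card ∧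
      TT H₂.verts H₂.edges ∧ H₂.verts.card < G.verts.card := by
  have hd : Disjoint M (G.verts \ M) := disjoint_sdiff
  have hu : M ∪ (G.verts \ M) = G.verts := union_sdiff_of_subset hM
  have h1 := ind_union G.not_isDiag hd
  rw [hu] at h1
  have hcc := card_union_of_disjoint hd
  rw [hu] at hcc
  have hlt' : M.card < G.verts.card := card_lt_card (hM.ssubset_of_ne hMV)
  have hne2 : (G.verts \ M).Nonempty := by rw [← card_pos]; omega
  have h2 := h.2 _ sdiff_subset hne2
  have h3 := h.1
  have hp := hne.card_pos
  unfold Tgt at ht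
  have hs : ∑ a ∈ M, cut G.edges a (G.verts \ M) = 1 := by omega
  refine ⟨restr G M, restr G (G.verts \ M), ?_, ?_, hlt', ?_, ?_⟩
  · obtain ⟨a, ha, hca⟩ : ∃ a ∈ M, cut G.edges a (G.verts \ M) ≠ 0 := by
      by_contra! hcon
      rw [sum_eq_zero hcon] at hs
      omega
    have hca1 : cut G.edges a (G.verts \ M) = 1 := by
      have := single_le_sum (f := fun a => cut G.edges a (G.verts \ M)) (fun _ _ => Nat.zero_le _) ha
      omega
    have hothers : ∀ c ∈ M, c ≠ a → cut G.edges c (G.verts \ M) = 0 := by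
      intro c hc hca2
      have := add_sum_erase M (fun a => cut G.edges a (G.verts \ M)) ha
      have := single_le_sum (f := fun a => cut G.edges a (G.verts \ M)) (fun _ _ => Nat.zero_le _)
        (mem_erase.2 ⟨hca2, hc⟩)
      omega
    have hca1' := hca1
    unfold cut at hca1'
    rw [card_eq_one] at hca1'
    obtain ⟨b, hb⟩ := hca1'
    have hbm : b ∈ (G.verts \ M).filter (fun w => s(a, w) ∈ G.edges) := by rw [hb]; simp
    rw [mem_filter] at hbm
    have cross : ∀ p q, s(p, q) ∈ G.edges → p ∈ M → q ∉ M → s(p, q) = s(a, b) := by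
      intro p q hpq hp hq
      have hqm : q ∈ (G.verts \ M).filter (fun w => s(p, w) ∈ G.edges) :=
        mem_filter.2 ⟨mem_sdiff.2 ⟨G.r hpq, hq⟩, hpq⟩
      by_cases hpa : p = a
      · subst hpa
        rw [hb, mem_singleton] at hqm
        rw [hqm]
      · have := hothers p hp hpa
        unfold cut at this
        rw [card_eq_zero] at this
        rw [this] at hqm
        simp at hqm
    refine ⟨a, b, hd, ha, hbm.1, hu.symm, ?_⟩
    apply edges_ext
    intro p q
    rw [mem_insert, mem_union, mem_restr, mem_restr, mem_sdiff, mem_sdiff]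
    constructor
    · intro hpq
      by_cases hp : p ∈ M <;> by_cases hq : q ∈ M
      · exact Or.inr (Or.inl ⟨hpq, hp, hq⟩)
      · exact Or.inl (cross p q hpq hp hq)
      · left; rw [Sym2.eq_swap]; exact cross q p (sw hpq) hq hp
      · exact Or.inr (Or.inr ⟨hpq, ⟨G.l hpq, hp⟩, G.r hpq, hq⟩)
    · rintro (h | h | h)
      · rw [h]; exact hbm.2
      · exact h.1
      · exact h.1
  · exact TT_restr ⟨ht, fun S hS hne => h.2 S (hS.trans hM) hne⟩
  · exact TT_restr ⟨by omega, fun S hS hne => h.2 S (hS.trans sdiff_subset) hne⟩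
  · change (G.verts \ M).card < _
    omega


/-- Contraction of `F` to the new vertex `v`. -/
def contr (G : FinGraph) (F : Finset ℕ) (v : ℕ) (hv : v ∉ G.verts) : FinGraph where
  verts := insert v (G.verts \ F)
  edges := (G.edges ∩ (G.verts \ F).sym2) ∪
    ((G.verts \ F).filter (fun w => ∃ x ∈ F, s(w, x) ∈ G.edges)).image (fun w => s(v, w))
  not_isDiag := by
    intro e he
    rcases mem_union.1 he with he | he
    · exact G.not_isDiag e (mem_inter.1 he).1
    · obtain ⟨w, hw, rfl⟩ := mem_image.1 he
      rw [Sym2.mk_isDiag_iff]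
      rintro rfl
      exact hv (mem_sdiff.1 (mem_filter.1 hw).1).1
  mem_verts := by
    intro e he x hx
    rcases mem_union.1 he with he | he
    · exact mem_insert_of_mem (mem_sym2_iff.1 (mem_inter.1 he).2 x hx)
    · obtain ⟨w, hw, rfl⟩ := mem_image.1 he
      rcases Sym2.mem_iff.1 hx with rfl | rfl
      · exact mem_insert_self _ _
      · exact mem_insert_of_mem (mem_filter.1 hw).1

lemma contr_R {G : FinGraph} {F : Finset ℕ} {v : ℕ} (hv : v ∉ G.verts) {a b : ℕ} (ha : a ≠ v)
    (hb : b ≠ v) : s(a, b) ∈ (contr G F v hv).edges ↔ s(a, b) ∈ G.edges ∧ a ∉ F ∧ b ∉ F := by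
  simp only [contr, mem_union, mem_inter, mk_mem_sym2_iff, mem_image, mem_filter, mem_sdiff,
    Sym2.eq_iff]
  constructor
  · rintro (h | ⟨w, -, ⟨rfl, rfl⟩ | ⟨rfl, rfl⟩⟩)
    · exact ⟨h.1, h.2.1.2, h.2.2.2⟩
    · exact absurd rfl ha
    · exact absurd rfl hb
  · rintro ⟨h, h1, h2⟩
    exact Or.inl ⟨h, ⟨G.l h, h1⟩, G.r h, h2⟩

lemma contr_v {G : FinGraph} {F : Finset ℕ} {v : ℕ} (hv : v ∉ G.verts) {w : ℕ} :
    s(v, w) ∈ (contr G F v hv).edges ↔ w ∈ G.verts ∧ w ∉ F ∧ ∃ x ∈ F, s(w, x) ∈ G.edges := by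
  simp only [contr, mem_union, mem_inter, mk_mem_sym2_iff, mem_image, mem_filter, mem_sdiff,
    Sym2.eq_iff]
  constructor
  · rintro (h | ⟨x, h, ⟨-, rfl⟩ | ⟨rfl, rfl⟩⟩)
    · exact absurd h.2.1.1 hv
    · exact ⟨h.1.1, h.1.2, h.2⟩
    · exact absurd h.1.1 hv
  · rintro ⟨h, h1, h2⟩
    exact Or.inr ⟨w, ⟨⟨h, h1⟩, h2⟩, Or.inl ⟨trivial, rfl⟩⟩

lemma contr_Ctr {G : FinGraph} {F : Finset ℕ} {v : ℕ} (hv : v ∉ G.verts) :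
    Ctr (G.verts \ F) F v (contr G F v hv).edges G.edges := by
  refine ⟨(contr G F v hv).not_isDiag, G.not_isDiag, ?_, disjoint_sdiff.symm, ?_⟩
  · intro h; exact hv (mem_sdiff.1 h).1
  · intro a ha b hb
    rw [mem_sdiff] at ha hb
    rw [contr_R hv]
    · tauto
    · rintro rfl; exact hv ha.1
    · rintro rfl; exact hv hb.1

lemma contr_card {G : FinGraph} {F : Finset ℕ} {v : ℕ} (hv : v ∉ G.verts) (hF : F ⊆ G.verts)
    (h2 : 2 ≤ F.card) : (contr G F v hv).verts.card < G.verts.card := by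
  change (insert v (G.verts \ F)).card < _
  rw [card_insert_of_notMem (fun h => hv (mem_sdiff.1 h).1)]
  have := card_sdiff_add_card_eq_card hF
  omega

lemma rev_k4 {G : FinGraph} (h : TT G.verts G.edges) {K : Finset ℕ} (hK : K ⊆ G.verts)
    (hc : Clq G.edges K) (hcut : ∀ w ∈ G.verts, w ∉ K → cut G.edges w K < 2) :
    ∃ H, VertexToK4 H G ∧ TT H.verts H.edges ∧ H.verts.card < G.verts.card := by
  obtain ⟨v, hv⟩ := Infinite.exists_notMem_finset G.verts
  have C := contr_Ctr (F := K) hv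
  refine ⟨contr G K v hv, ?_, ?_, contr_card hv hK (by rw [hc.1]; omega)⟩
  · let k : Fin 4 → ℕ := fun i => (K.equivFin.symm (Fin.cast hc.1.symm i) : ℕ)
    have hk : Function.Injective k := by
      intro i j hij
      have := K.equivFin.symm.injective (Subtype.ext hij)
      exact Fin.cast_injective _ this
    have hkK : ∀ i, k i ∈ K := fun i => (K.equivFin.symm (Fin.cast hc.1.symm i)).2
    have hks : ∀ x ∈ K, ∃ i, k i = x := by
      intro x hx
      refine ⟨Fin.cast hc.1 (K.equivFin ⟨x, hx⟩), ?_⟩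
      simp [k]
    have hf : ∀ w, ∃ i : Fin 4, (∃ x ∈ K, s(w, x) ∈ G.edges) → s(w, k i) ∈ G.edges := by
      intro w
      by_cases hw : ∃ x ∈ K, s(w, x) ∈ G.edges
      · obtain ⟨x, hx, hwx⟩ := hw
        obtain ⟨i, rfl⟩ := hks x hx
        exact ⟨i, fun _ => hwx⟩
      · exact ⟨0, fun h => absurd h hw⟩
    choose f hf using hf
    have hone : ∀ w ∈ G.verts, w ∉ K → ∀ x ∈ K, s(w, x) ∈ G.edges → x = k (f w) := by
      intro w hw hwK x hx hwx
      by_contra hne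
      have := hcut w hw hwK
      have := two_le_cut hne hx (hkK (f w)) hwx (hf w ⟨x, hx, hwx⟩)
      omega
    have hvn : ∀ x ∈ G.verts, x ≠ v := by rintro x hx rfl; exact hv hx
    refine ⟨v, k, f, mem_insert_self _ _, hk, ?_, ?_, ?_⟩
    · intro i hi
      rcases mem_insert.1 hi with hi | hi
      · exact hvn _ (hK (hkK i)) hi
      · exact (mem_sdiff.1 hi).2 (hkK i)
    · change G.verts = (insert v (G.verts \ K)).erase v ∪ _
      rw [erase_insert (fun h => hv (mem_sdiff.1 h).1)]
      have : ({k 0, k 1, k 2, k 3} : Finset ℕ) = K := by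
        ext x
        simp only [mem_insert, mem_singleton]
        constructor
        · rintro (rfl | rfl | rfl | rfl) <;> apply hkK
        · intro hx
          obtain ⟨i, rfl⟩ := hks x hx
          fin_cases i <;> simp
      rw [this, sdiff_union_of_subset hK]
    · apply edges_ext
      intro p q
      rw [vk4_mem (G := contr G K v hv) (v := v) (k := k) (f := f) rfl, contr_v, contr_v]
      constructor
      · intro hpq
        have hp := hvn p (G.l hpq)
        have hq := hvn q (G.r hpq)
        rw [contr_R hv hp hq]
        by_cases hpK : p ∈ K <;> by_cases hqK : q ∈ K
        · right; left
          obtain ⟨i, rfl⟩ := hks p hpK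
          obtain ⟨j, rfl⟩ := hks q hqK
          exact ⟨i, j, fun hij => G.ne hpq (by rw [hij]), rfl, rfl⟩
        · right; right; right
          exact ⟨⟨G.r hpq, hqK, p, hpK, sw hpq⟩, hone q (G.r hpq) hqK p hpK (sw hpq)⟩
        · right; right; left
          exact ⟨⟨G.l hpq, hpK, q, hqK, hpq⟩, hone p (G.l hpq) hpK q hqK hpq⟩
        · left
          exact ⟨⟨hpq, hpK, hqK⟩, hp, hq⟩
      · rintro (⟨h, hp, hq⟩ | ⟨i, j, hij, rfl, rfl⟩ | ⟨h, rfl⟩ | ⟨h, rfl⟩)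
        · exact ((contr_R hv hp hq).1 h).1
        · exact hc.2 _ (hkK i) _ (hkK j) (fun hij' => hij (hk hij'))
        · exact hf p h.2.2
        · exact sw (hf q h.2.2)
  · refine C.k4_rev hc ?_ (by rwa [sdiff_union_of_subset hK])
    intro w hw
    rw [mem_sdiff] at hw
    have := hcut w hw.1 hw.2
    have e : s(w, v) ∈ (contr G K v hv).edges ↔ cut G.edges w K ≠ 0 := by
      rw [Sym2.eq_swap, contr_v]
      unfold cut
      rw [Ne, card_eq_zero, filter_eq_empty_iff]
      push Not
      constructor
      · rintro ⟨_, _, h⟩; exact h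
      · intro h; exact ⟨hw.1, hw.2, h⟩
    rw [if_congr e rfl rfl]
    split_ifs <;> omega

lemma rev_vs {G : FinGraph} (h : TT G.verts G.edges) {p q r : ℕ} (hpq : s(p, q) ∈ G.edges)
    (hpr : s(p, r) ∈ G.edges) (hqr : s(q, r) ∈ G.edges)
    (hun : ∀ x, s(p, x) ∈ G.edges → s(q, x) ∈ G.edges → x = r)
    (hno : ∀ T ⊆ G.verts, p ∈ T → q ∈ T → r ∉ T → ¬ Tgt G.edges T) :
    ∃ H, VertexSplit H G ∧ TT H.verts H.edges ∧ H.verts.card < G.verts.card := by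
  obtain ⟨v, hv⟩ := Infinite.exists_notMem_finset G.verts
  have C := contr_Ctr (F := {p, q}) hv
  have hF : ({p, q} : Finset ℕ) ⊆ G.verts := insert_subset (G.l hpq) (singleton_subset_iff.2 (G.r hpq))
  have hne := G.ne hpq
  have hrF : r ∉ ({p, q} : Finset ℕ) := by
    rw [mem_insert, mem_singleton]
    rintro (rfl | rfl)
    · exact G.ne hpr rfl
    · exact G.ne hqr rfl
  have hvn : ∀ x ∈ G.verts, x ≠ v := by rintro x hx rfl; exact hv hx
  have hF' : ∀ x, x ∈ ({p, q} : Finset ℕ) ↔ x = p ∨ x = q := by simp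
  have hex : ∀ w, (∃ x ∈ ({p, q} : Finset ℕ), s(w, x) ∈ G.edges) ↔ s(w, p) ∈ G.edges ∨ s(w, q) ∈ G.edges := by
    intro w; simp
  refine ⟨contr G {p, q} v hv, ?_, ?_, contr_card hv hF (by rw [card_pair hne])⟩
  · refine ⟨v, r, p, q, fun w => decide (s(w, q) ∈ G.edges), mem_insert_self _ _, ?_, ?_, ?_, hne, ?_, ?_⟩
    · rw [contr_v]; exact ⟨G.r hpr, hrF, p, by simp, sw hpr⟩
    · intro hi
      rcases mem_insert.1 hi with hi | hi
      · exact hvn _ (G.l hpq) hi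
      · exact (mem_sdiff.1 hi).2 (by simp)
    · intro hi
      rcases mem_insert.1 hi with hi | hi
      · exact hvn _ (G.r hpq) hi
      · exact (mem_sdiff.1 hi).2 (by simp)
    · change G.verts = insert p (insert q ((insert v (G.verts \ {p, q})).erase v))
      rw [erase_insert (fun h => hv (mem_sdiff.1 h).1)]
      conv_lhs => rw [← union_sdiff_of_subset hF]
      rw [insert_union, singleton_union]
    · apply edges_ext
      intro a b
      rw [vs_mem (G := contr G {p, q} v hv) (v := v) (v₀ := p) (v₁ := q) (u := r)
        (σ := fun w => decide (s(w, q) ∈ G.edges)) rfl, contr_v, contr_v, hex, hex]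
      simp only [decide_eq_true_eq]
      have side : ∀ a b, s(a, b) ∈ G.edges → a ∉ ({p, q} : Finset ℕ) → b ∈ ({p, q} : Finset ℕ) → a ≠ r →
          (s(a, p) ∈ G.edges ∨ s(a, q) ∈ G.edges) ∧ b = if s(a, q) ∈ G.edges then q else p := by
        intro a b hab ha hb har
        rcases (hF' b).1 hb with rfl | rfl
        · refine ⟨Or.inl hab, ?_⟩
          rw [if_neg]
          intro h
          exact har (hun a (sw hab) (sw h))
        · exact ⟨Or.inr hab, by rw [if_pos hab]⟩
      have side2 : ∀ a, (s(a, p) ∈ G.edges ∨ s(a, q) ∈ G.edges) →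
          s(a, if s(a, q) ∈ G.edges then q else p) ∈ G.edges := by
        intro a ha
        split_ifs with h
        · exact h
        · tauto
      constructor
      · intro hab
        have ha := hvn a (G.l hab)
        have hb := hvn b (G.r hab)
        rw [contr_R hv ha hb]
        by_cases haF : a ∈ ({p, q} : Finset ℕ) <;> by_cases hbF : b ∈ ({p, q} : Finset ℕ)
        · right; left; left
          have := G.ne hab
          rcases (hF' a).1 haF with rfl | rfl <;> rcases (hF' b).1 hbF with rfl | rfl
          · exact absurd rfl this
          · rfl
          · exact Sym2.eq_swap
          · exact absurd rfl this
        · by_cases hbr : b = r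
          · subst hbr
            right; left; right
            rcases (hF' a).1 haF with rfl | rfl
            · left; exact Sym2.eq_swap
            · right; exact Sym2.eq_swap
          · right; right; right
            have := side b a (sw hab) hbF haF hbr
            exact ⟨⟨G.r hab, hbF, this.1⟩, hbr, this.2⟩
        · by_cases har : a = r
          · subst har
            right; left; right
            rcases (hF' b).1 hbF with rfl | rfl
            · left; rfl
            · right; rfl
          · right; right; left
            have := side a b hab haF hbF har
            exact ⟨⟨G.l hab, haF, this.1⟩, har, this.2⟩
        · left
          exact ⟨⟨hab, haF, hbF⟩, ha, hb⟩
      · rintro (⟨h, ha, hb⟩ | (h | h | h) | ⟨h, _, rfl⟩ | ⟨h, _, rfl⟩)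
        · exact ((contr_R hv ha hb).1 h).1
        · rw [h]; exact hpq
        · rw [h]; exact sw hpr
        · rw [h]; exact sw hqr
        · exact side2 a h.2.2
        · exact sw (side2 b h.2.2)
  · refine C.vs_rev (u := r) hpq (mem_sdiff.2 ⟨G.r hpr, hrF⟩) ?_ ?_ (by rwa [sdiff_union_of_subset hF])
    · intro w hw
      rw [mem_sdiff] at hw
      have e : s(w, v) ∈ (contr G {p, q} v hv).edges ↔ s(w, p) ∈ G.edges ∨ s(w, q) ∈ G.edges := by
        rw [Sym2.eq_swap, contr_v, hex]
        tauto
      rw [if_congr e rfl rfl, cut_pair hne]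
      by_cases hwr : r = w
      · subst hwr
        simp [sw hpr, sw hqr]
      · have : ¬ (s(w, p) ∈ G.edges ∧ s(w, q) ∈ G.edges) :=
          fun h => hwr (hun w (sw h.1) (sw h.2)).symm
        by_cases h1 : s(w, p) ∈ G.edges <;> by_cases h2 : s(w, q) ∈ G.edges <;>
          simp [h1, h2, hwr] at this ⊢
    · rw [sdiff_union_of_subset hF]
      exact hno

lemma rev_k5 {G : FinGraph} (h : TT G.verts G.edges) {K L : Finset ℕ}
    (hK : Clq G.edges K) (hL : Clq G.edges L) (h3 : (K ∩ L).card = 3) (hu : K ∪ L = G.verts) :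
    IsK5MinusE G := by
  have c1 := card_sdiff_add_card_inter K L
  have c2 := card_sdiff_add_card_inter L K
  rw [inter_comm L K] at c2
  have c3 := card_union_add_card_inter K L
  have k1 := hK.1
  have l1 := hL.1
  obtain ⟨a, ha⟩ := card_eq_one.1 (show (K \ L).card = 1 by omega)
  obtain ⟨b, hb⟩ := card_eq_one.1 (show (L \ K).card = 1 by omega)
  obtain ⟨c, d, e, hcd, hce, hde, hs⟩ := card_eq_three.1 h3
  have ma : a ∈ K ∧ a ∉ L := by rw [← mem_sdiff, ha]; simp
  have mb : b ∈ L ∧ b ∉ K := by rw [← mem_sdiff, hb]; simp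
  have mc : c ∈ K ∧ c ∈ L := by rw [← mem_inter, hs]; simp
  have md : d ∈ K ∧ d ∈ L := by rw [← mem_inter, hs]; simp
  have me : e ∈ K ∧ e ∈ L := by rw [← mem_inter, hs]; simp
  have nab : a ≠ b := by rintro rfl; exact mb.2 ma.1
  have nac : a ≠ c := by rintro rfl; exact ma.2 mc.2
  have nad : a ≠ d := by rintro rfl; exact ma.2 md.2
  have nae : a ≠ e := by rintro rfl; exact ma.2 me.2
  have nbc : b ≠ c := by rintro rfl; exact mb.2 mc.1
  have nbd : b ≠ d := by rintro rfl; exact mb.2 md.1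
  have nbe : b ≠ e := by rintro rfl; exact mb.2 me.1
  refine ⟨a, b, c, d, e, nab, nac, nad, nae, nbc, nbd, nbe, hcd, hce, hde, ?_, ?_⟩
  · symm
    apply eq_of_subset_of_card_le
    · rw [← hu]
      intro x hx
      simp only [mem_insert, mem_singleton] at hx
      rw [mem_union]
      rcases hx with rfl | rfl | rfl | rfl | rfl <;> tauto
    · rw [← hu]
      have : ({a, b, c, d, e} : Finset ℕ).card = 5 := by
        simp [*]
      omega
  · symm
    apply eq_of_subset_of_card_le
    · intro x hx
      simp only [mem_insert, mem_singleton] at hx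
      rcases hx with rfl | rfl | rfl | rfl | rfl | rfl | rfl | rfl | rfl
      · exact hK.2 _ ma.1 _ mc.1 nac
      · exact hK.2 _ ma.1 _ md.1 nad
      · exact hK.2 _ ma.1 _ me.1 nae
      · exact hL.2 _ mb.1 _ mc.2 nbc
      · exact hL.2 _ mb.1 _ md.2 nbd
      · exact hL.2 _ mb.1 _ me.2 nbe
      · exact hK.2 _ mc.1 _ md.1 hcd
      · exact hK.2 _ mc.1 _ me.1 hce
      · exact hK.2 _ md.1 _ me.1 hde
    · have := h.1
      rw [ind_verts, ← hu] at this
      clear ha hb hs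
      repeat rw [card_insert_of_notMem (by
        simp only [mem_insert, mem_singleton, Sym2.eq_iff]; grind)]
      simp
      omega

lemma rev_k44 {G : FinGraph} (h : TT G.verts G.edges) {K L : Finset ℕ}
    (hK : Clq G.edges K) (hL : Clq G.edges L) (h3 : (K ∩ L).card = 2) (hu : K ∪ L = G.verts) :
    IsK4JoinK4 G := by
  have c1 := card_sdiff_add_card_inter K L
  have c2 := card_sdiff_add_card_inter L K
  rw [inter_comm L K] at c2
  have c3 := card_union_add_card_inter K L
  have k1 := hK.1
  have l1 := hL.1
  obtain ⟨c, d, hcd, hs1⟩ := card_eq_two.1 (show (K \ L).card = 2 by omega)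
  obtain ⟨e, f, hef, hs2⟩ := card_eq_two.1 (show (L \ K).card = 2 by omega)
  obtain ⟨a, b, hab, hs⟩ := card_eq_two.1 h3
  have mc : c ∈ K ∧ c ∉ L := by rw [← mem_sdiff, hs1]; simp
  have md : d ∈ K ∧ d ∉ L := by rw [← mem_sdiff, hs1]; simp
  have me : e ∈ L ∧ e ∉ K := by rw [← mem_sdiff, hs2]; simp
  have mf : f ∈ L ∧ f ∉ K := by rw [← mem_sdiff, hs2]; simp
  have ma : a ∈ K ∧ a ∈ L := by rw [← mem_inter, hs]; simp
  have mb : b ∈ K ∧ b ∈ L := by rw [← mem_inter, hs]; simp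
  have nac : a ≠ c := by rintro rfl; exact mc.2 ma.2
  have nad : a ≠ d := by rintro rfl; exact md.2 ma.2
  have nae : a ≠ e := by rintro rfl; exact me.2 ma.1
  have naf : a ≠ f := by rintro rfl; exact mf.2 ma.1
  have nbc : b ≠ c := by rintro rfl; exact mc.2 mb.2
  have nbd : b ≠ d := by rintro rfl; exact md.2 mb.2
  have nbe : b ≠ e := by rintro rfl; exact me.2 mb.1
  have nbf : b ≠ f := by rintro rfl; exact mf.2 mb.1
  have nce : c ≠ e := by rintro rfl; exact me.2 mc.1
  have ncf : c ≠ f := by rintro rfl; exact mf.2 mc.1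
  have nde : d ≠ e := by rintro rfl; exact me.2 md.1
  have ndf : d ≠ f := by rintro rfl; exact mf.2 md.1
  refine ⟨a, b, c, d, e, f, hab, nac, nad, nae, naf, nbc, nbd, nbe, nbf, hcd, nce, ncf, nde, ndf,
    hef, ?_, ?_⟩
  · symm
    apply eq_of_subset_of_card_le
    · rw [← hu]
      intro x hx
      simp only [mem_insert, mem_singleton] at hx
      rw [mem_union]
      rcases hx with rfl | rfl | rfl | rfl | rfl | rfl <;> tauto
    · rw [← hu]
      have : ({a, b, c, d, e, f} : Finset ℕ).card = 6 := by
        simp [*]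
      omega
  · symm
    apply eq_of_subset_of_card_le
    · intro x hx
      simp only [mem_insert, mem_singleton] at hx
      rcases hx with rfl | rfl | rfl | rfl | rfl | rfl | rfl | rfl | rfl | rfl | rfl
      · exact hK.2 _ ma.1 _ mb.1 hab
      · exact hK.2 _ ma.1 _ mc.1 nac
      · exact hK.2 _ ma.1 _ md.1 nad
      · exact hK.2 _ mb.1 _ mc.1 nbc
      · exact hK.2 _ mb.1 _ md.1 nbd
      · exact hK.2 _ mc.1 _ md.1 hcd
      · exact hL.2 _ ma.2 _ me.1 nae
      · exact hL.2 _ ma.2 _ mf.1 naf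
      · exact hL.2 _ mb.2 _ me.1 nbe
      · exact hL.2 _ mb.2 _ mf.1 nbf
      · exact hL.2 _ me.1 _ mf.1 hef
    · have := h.1
      rw [ind_verts, ← hu] at this
      clear hs1 hs2 hs
      repeat rw [card_insert_of_notMem (by
        simp only [mem_insert, mem_singleton, Sym2.eq_iff]; grind)]
      simp
      omega

lemma rev (n : ℕ) : ∀ G : FinGraph, G.verts.card = n → TT G.verts G.edges → NOClass21 G := by
  induction n using Nat.strong_induction_on with
  | _ n ih =>
    intro G hn h
    by_contra hcon
    have ih' : ∀ H : FinGraph, TT H.verts H.edges → H.verts.card < G.verts.card → NOClass21 H :=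
      fun H h1 h2 => ih _ (hn ▸ h2) H rfl h1
    refine Irr.absurd_irr (V := G.verts) (E := G.edges) ⟨G.not_isDiag, fun a b h => G.l h, h, ?_, ?_, ?_, ?_, ?_, ?_⟩
    · intro v hv
      have h2 := rev_deg h hv
      by_contra h3
      obtain ⟨H, hop, ht, hlt⟩ := rev_va h hv (by omega)
      exact hcon (.va H G (ih' H ht hlt) hop)
    · intro v hv hc
      refine rev_es h hv hc ?_
      rintro ⟨H, hop, ht, hlt⟩
      exact hcon (.es H G (ih' H ht hlt) hop)
    · intro K hK hc
      by_contra! hcut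
      obtain ⟨H, hop, ht, hlt⟩ := rev_k4 h hK hc hcut
      exact hcon (.vk4 H G (ih' H ht hlt) hop)
    · intro p q r hpq hpr hqr hun
      by_contra! hno
      obtain ⟨H, hop, ht, hlt⟩ := rev_vs h hpq hpr hqr hun hno
      exact hcon (.vs H G (ih' H ht hlt) hop)
    · intro M hM hMV hne ht
      by_contra! hlt
      obtain ⟨H₁, H₂, hop, t1, l1, t2, l2⟩ := rev_join h hM hMV hne ht hlt
      exact hcon (.join H₁ H₂ G (ih' _ t1 l1) (ih' _ t2 l2) hop)
    · intro K _ L _ hK hL h2 h3 hu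
      by_cases h4 : (K ∩ L).card = 3
      · exact hcon (.k5e G (rev_k5 h hK hL h4 hu))
      · exact hcon (.k4k4 G (rev_k44 h hK hL (by omega) hu))

/-- **Nixon–Owen construction of simple (2,1)-tight graphs.** A simple graph is (2,1)-tight
if and only if it can be generated from `K₅ − e` or `K₄ ⊔ K₄` by vertex addition, edge
splitting, vertex-to-`K₄`, vertex splitting and edge joining operations. -/
theorem statement_18 (G : FinGraph) : Tight21 G ↔ NOClass21 G := by
  rw [tight_iff]
  exact ⟨rev _ G rfl, fwd⟩
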